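/- Suppose ℙ(X ≠ 1) > 0. Let ν be a σ-ergodic measure satisfying property (G); if Q = Q_{h_ν(σ)}, suppose in addition that ν satisfies property (G̃). Then, if h_ν(σ) = h_X, the measure ν is Q-singular. -/

import Mathlib

open MeasureTheory ProbabilityTheory Filter Set
open scoped ENNReal

noncomputable section

/-- The one-sided symbolic space over the alphabet `{0, …, b-1}`. -/
abbrev SymbSpace (b : ℕ) : Type := ℕ → Fin b

/-- The cylinder `[w]` of sequences starting with the finite word `w`. -/
def cylinder {b : ℕ} (w : List (Fin b)) : Set (SymbSpace b) :=
  {x | ∀ i : Fin w.length, x i = w.get i}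

/-- The prefix `x|_n` of `x` of length `n`, as a finite word. -/
def wordPrefix {b : ℕ} (x : SymbSpace b) (n : ℕ) : List (Fin b) :=
  List.ofFn (fun i : Fin n => x i)

/-- `Y_w = X_{w_1} X_{w_1w_2} ⋯ X_{w_1⋯w_n}`. -/
def cascadeY {b : ℕ} {Ω : Type*} (X : List (Fin b) → Ω → ℝ) (w : List (Fin b)) (ω : Ω) : ℝ :=
  ∏ k ∈ Finset.range w.length, X (w.take (k + 1)) ω

/-- The total mass `Z_n = ∑_{|u| = n} Y_u ν([u])`. -/
def cascadeZ {b : ℕ} {Ω : Type*} (X : List (Fin b) → Ω → ℝ) (ν : Measure (SymbSpace b))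
    (n : ℕ) (ω : Ω) : ℝ :=
  ∑ u : Fin n → Fin b, cascadeY X (List.ofFn u) ω * (ν (cylinder (List.ofFn u))).toReal

/-- `Z = limsup_n Z_n`. -/
def cascadeZlim {b : ℕ} {Ω : Type*} (X : List (Fin b) → Ω → ℝ) (ν : Measure (SymbSpace b))
    (ω : Ω) : ℝ :=
  Filter.limsup (fun n => cascadeZ X ν n ω) atTop

/-- Assumption (M1): the weights `X_u`, `u` a nonempty finite word, are i.i.d. with common
law that of the nonnegative random variable `X₀` of expectation 1. -/
structure CascadeM1 {b : ℕ} {Ω : Type*} [MeasurableSpace Ω] (P : Measure Ω)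
    (X : List (Fin b) → Ω → ℝ) (X₀ : Ω → ℝ) : Prop where
  meas : ∀ w, Measurable (X w)
  nonneg : ∀ w ω, 0 ≤ X w ω
  meas₀ : Measurable X₀
  nonneg₀ : ∀ ω, 0 ≤ X₀ ω
  mean₀ : ∫ ω, X₀ ω ∂P = 1
  indep : iIndepFun
    (fun w : {w : List (Fin b) // w ≠ []} => X w.1) P
  ident : ∀ w : List (Fin b), w ≠ [] → IdentDistrib (X w) X₀ P P

/-- `h_X = E(X log X) ∈ [0, ∞]` (well defined since `x log x ≥ -e⁻¹` and, by convexity,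
`E(X log X) ≥ E(X) log E(X) = 0`), encoded as an extended nonnegative real. -/
def entropyX {Ω : Type*} [MeasurableSpace Ω] (P : Measure Ω) (X₀ : Ω → ℝ) : ℝ≥0∞ :=
  (∫⁻ ω, ENNReal.ofReal (X₀ ω * Real.log (X₀ ω)) ∂P) -
    (∫⁻ ω, ENNReal.ofReal (-(X₀ ω * Real.log (X₀ ω))) ∂P)

/-- The lower local dimension `liminf_n (-log ν([x|_n]) / n)` of `ν` at `x`, valued
in `[0, ∞]`. -/
def lowerLocalDim {b : ℕ} (ν : Measure (SymbSpace b)) (x : SymbSpace b) : ℝ≥0∞ :=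
  Filter.liminf
    (fun n : ℕ => ENNReal.ofReal (-Real.log ((ν (cylinder (wordPrefix x n))).toReal) / n))
    atTop

/-- The upper local dimension `limsup_n (-log ν([x|_n]) / n)` of `ν` at `x`. -/
def upperLocalDim {b : ℕ} (ν : Measure (SymbSpace b)) (x : SymbSpace b) : ℝ≥0∞ :=
  Filter.limsup
    (fun n : ℕ => ENNReal.ofReal (-Real.log ((ν (cylinder (wordPrefix x n))).toReal) / n))
    atTop

/-- The lower Hausdorff dimension of `ν`: the `ν`-essential infimum of the lower local
dimension. -/
def lowerHausdorffDim {b : ℕ} (ν : Measure (SymbSpace b)) : ℝ≥0∞ :=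
  essInf (lowerLocalDim ν) ν

/-- The upper Hausdorff dimension of `ν`: the `ν`-essential supremum of the lower local
dimension. -/
def upperHausdorffDim {b : ℕ} (ν : Measure (SymbSpace b)) : ℝ≥0∞ :=
  essSup (lowerLocalDim ν) ν

/-- The upper packing dimension of `ν`: the `ν`-essential supremum of the upper local
dimension. -/
def upperPackingDim {b : ℕ} (ν : Measure (SymbSpace b)) : ℝ≥0∞ :=
  essSup (upperLocalDim ν) ν


/-- The left shift on the one-sided symbolic space. -/
def shiftMap (b : ℕ) : SymbSpace b → SymbSpace b := fun x n => x (n + 1)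

/-- The entropy sums `n⁻¹ ∑_{|u| = n} −ν([u]) log ν([u])`, whose limit is the
measure-theoretic entropy `h_ν(σ)`. -/
def entropySeq {b : ℕ} (ν : Measure (SymbSpace b)) (n : ℕ) : ℝ :=
  (n : ℝ)⁻¹ * ∑ u : Fin n → Fin b,
    -((ν (cylinder (List.ofFn u))).toReal * Real.log ((ν (cylinder (List.ofFn u))).toReal))

/-- Property (G): there are measurable functions `C ≥ 1` and `f`, finite `ν`-a.e., with
`C(x)⁻¹ e^{∑_{k<n} f(σᵏx)} ≤ ν([x|_n]) ≤ C(x) e^{∑_{k<n} f(σᵏx)}` for `ν`-a.e. `x` and all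
`n ≥ 1`. -/
def PropertyG {b : ℕ} (ν : Measure (SymbSpace b)) (f : SymbSpace b → ℝ) : Prop :=
  Measurable f ∧ ∃ C : SymbSpace b → ℝ, Measurable C ∧ (∀ᵐ x ∂ν, 1 ≤ C x) ∧
    (∀ᵐ x ∂ν, ∀ n : ℕ, 1 ≤ n →
      (C x)⁻¹ * Real.exp (∑ k ∈ Finset.range n, f ((shiftMap b)^[k] x)) ≤
          (ν (cylinder (wordPrefix x n))).toReal ∧
        (ν (cylinder (wordPrefix x n))).toReal ≤
          C x * Real.exp (∑ k ∈ Finset.range n, f ((shiftMap b)^[k] x)))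

/-- `ν` is the uniform measure `λ`, i.e. assigns mass `b^{-|u|}` to every cylinder `[u]`. -/
def IsUniformMeasure {b : ℕ} (ν : Measure (SymbSpace b)) : Prop :=
  ∀ w : List (Fin b), ν (cylinder w) = ((b : ℝ≥0∞))⁻¹ ^ w.length

/-- Property (G̃): `ν` satisfies (G) with potential `f`, and if `ν` is not the uniform
measure then `limsup_n ∑_{k<n} (f(σᵏx) + h_ν(σ)) = ∞` for `ν`-a.e. `x`. -/
def PropertyGtilde {b : ℕ} (ν : Measure (SymbSpace b)) (f : SymbSpace b → ℝ) (hν : ℝ) :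
    Prop :=
  PropertyG ν f ∧ (¬ IsUniformMeasure ν →
    ∀ᵐ x ∂ν, ∀ M : ℝ, ∃ᶠ n in atTop,
      M ≤ ∑ k ∈ Finset.range n, (f ((shiftMap b)^[k] x) + hν))

/-- `Q = Q_α`: the common law of the weights is `ℙ(X = e^α) = e^{-α}`,
`ℙ(X = 0) = 1 − e^{-α}`. -/
def IsQalphaCascade {Ω : Type*} [MeasurableSpace Ω] (P : Measure Ω) (X₀ : Ω → ℝ) (α : ℝ) :
    Prop :=
  P {ω | X₀ ω = Real.exp α} = ENNReal.ofReal (Real.exp (-α)) ∧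
    P {ω | X₀ ω = 0} = 1 - ENNReal.ofReal (Real.exp (-α))

section

def consSeq (p : ℝ × (ℕ → ℝ)) : ℕ → ℝ := fun n => Nat.casesOn n p.1 p.2

def tailSeq (ξ : ℕ → ℝ) : ℕ → ℝ := fun n => ξ (n + 1)

lemma measurable_consSeq : Measurable consSeq := by
  refine measurable_pi_lambda _ fun n => ?_
  cases n with
  | zero => exact measurable_fst
  | succ k => exact (measurable_pi_apply k).comp measurable_snd

lemma measurable_tailSeq : Measurable tailSeq :=
  measurable_pi_lambda _ fun n => measurable_pi_apply (n + 1)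

abbrev seqM (μ : Measure ℝ) [IsProbabilityMeasure μ] : Measure (ℕ → ℝ) :=
  Measure.infinitePi (fun _ : ℕ => μ)

lemma map_consSeq (μ : Measure ℝ) [IsProbabilityMeasure μ] :
    (μ.prod (seqM μ)).map consSeq = seqM μ := by
  refine Measure.eq_infinitePi (fun _ : ℕ => μ) ?_
  intro s t ht
  rw [Measure.map_apply measurable_consSeq (MeasurableSet.pi s.countable_toSet (fun i _ => ht i))]
  classical
  -- enlarge `s`
  let s' : Finset ℕ := s.preimage (· + 1) (by intro a _ b _ h; simpa using h)
  have hs' : ∀ i, i ∈ s' ↔ i + 1 ∈ s := fun i => Finset.mem_preimage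
  let A : Set ℝ := if 0 ∈ s then t 0 else univ
  have : consSeq ⁻¹' (Set.pi (s : Set ℕ) t) = A ×ˢ (Set.pi (s' : Set ℕ) (fun n => t (n + 1))) := by
    ext p
    simp only [mem_preimage, Set.mem_pi, mem_prod, Finset.mem_coe]
    constructor
    · intro h
      constructor
      · by_cases h0 : 0 ∈ s
        · simpa [A, h0] using! h 0 h0
        · simp [A, h0]
      · intro i hi
        exact h (i + 1) ((hs' i).1 hi)
    · rintro ⟨h1, h2⟩ i hi
      cases i with
      | zero =>
        have h1' : p.1 ∈ t 0 := by simpa [A, hi] using h1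
        exact h1'
      | succ k => exact h2 k ((hs' k).2 hi)
  rw [this, Measure.prod_prod, Measure.infinitePi_pi _ (fun i _ => ht (i + 1))]
  have hs : ∏ i ∈ s, μ (t i) = (∏ i ∈ s.filter (· = 0), μ (t i)) *
      ∏ i ∈ s.filter (¬ · = 0), μ (t i) := (Finset.prod_filter_mul_prod_filter_not _ _ _).symm
  rw [hs]
  congr 1
  · by_cases h0 : 0 ∈ s
    · simp [A, h0, Finset.filter_eq']
    · simp [A, h0, Finset.filter_eq']
  · refine Finset.prod_bij (fun i _ => i + 1) ?_ ?_ ?_ ?_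
    · intro a ha; simpa using (hs' a).1 ha
    · intro a _ b _ h; simpa using h
    · intro c hc
      simp only [Finset.mem_filter] at hc
      obtain ⟨k, rfl⟩ := Nat.exists_eq_succ_of_ne_zero hc.2
      exact ⟨k, (hs' k).2 hc.1, rfl⟩
    · intro a _; rfl

lemma mp_consSeq (μ : Measure ℝ) [IsProbabilityMeasure μ] :
    MeasurePreserving consSeq (μ.prod (seqM μ)) (seqM μ) := ⟨measurable_consSeq, map_consSeq μ⟩

lemma mp_tailSeq (μ : Measure ℝ) [IsProbabilityMeasure μ] :
    MeasurePreserving tailSeq (seqM μ) (seqM μ) := by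
  refine ⟨measurable_tailSeq, ?_⟩
  conv_lhs => rw [← map_consSeq μ]
  rw [Measure.map_map measurable_tailSeq measurable_consSeq]
  have : tailSeq ∘ consSeq = Prod.snd := rfl
  rw [this, Measure.map_snd_prod]; simp

lemma integral_cons_mul (μ : Measure ℝ) [IsProbabilityMeasure μ] (F : ℝ → ℝ) (H : (ℕ → ℝ) → ℝ)
    (hF : Measurable F) (hH : Measurable H) :
    ∫ ξ, F (ξ 0) * H (tailSeq ξ) ∂(seqM μ) = (∫ a, F a ∂μ) * ∫ ξ, H ξ ∂(seqM μ) := by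
  conv_lhs => rw [← map_consSeq μ]
  rw [integral_map measurable_consSeq.aemeasurable]
  · exact integral_prod_mul F H
  · exact ((hF.comp (measurable_pi_apply 0)).mul (hH.comp measurable_tailSeq)).aestronglyMeasurable

/-- The skew map. -/
def bigT (b : ℕ) (y : SymbSpace b × (ℕ → ℝ)) : SymbSpace b × (ℕ → ℝ) :=
  (shiftMap b y.1, tailSeq y.2)

lemma measurable_shiftMap (b : ℕ) : Measurable (shiftMap b) :=
  measurable_pi_lambda _ fun n => measurable_pi_apply (n + 1)

lemma measurable_bigT (b : ℕ) : Measurable (bigT b) :=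
  ((measurable_shiftMap b).comp measurable_fst).prodMk (measurable_tailSeq.comp measurable_snd)

lemma mp_bigT {b : ℕ} (ν : Measure (SymbSpace b)) [IsProbabilityMeasure ν]
    (h : MeasurePreserving (shiftMap b) ν ν) (μ : Measure ℝ) [IsProbabilityMeasure μ] :
    MeasurePreserving (bigT b) (ν.prod (seqM μ)) (ν.prod (seqM μ)) :=
  h.prod (mp_tailSeq μ)

/-- Partial sums. -/
def SG {b : ℕ} (f : SymbSpace b → ℝ) (n : ℕ) (y : SymbSpace b × (ℕ → ℝ)) : ℝ :=
  ∑ k ∈ Finset.range n, (y.2 k + f ((shiftMap b)^[k] y.1))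

lemma SG_succ {b : ℕ} (f : SymbSpace b → ℝ) (n : ℕ) (y : SymbSpace b × (ℕ → ℝ)) :
    SG f (n + 1) y = (y.2 0 + f y.1) + SG f n (bigT b y) := by
  unfold SG
  rw [Finset.sum_range_succ', add_comm]
  rfl

lemma measurable_SG {b : ℕ} {f : SymbSpace b → ℝ} (hf : Measurable f) (n : ℕ) :
    Measurable (SG f n) := by
  refine Finset.measurable_sum _ fun k _ => ?_
  exact ((measurable_pi_apply k).comp measurable_snd).add
    (hf.comp (((measurable_shiftMap b).iterate k).comp measurable_fst))

/-- The bounded set. -/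
def BE {b : ℕ} (f : SymbSpace b → ℝ) : Set (SymbSpace b × (ℕ → ℝ)) :=
  {y | ∃ K : ℕ, ∀ n, SG f n y ≤ K}

lemma measurableSet_BE {b : ℕ} {f : SymbSpace b → ℝ} (hf : Measurable f) :
    MeasurableSet (BE f) := by
  have : BE f = ⋃ K : ℕ, ⋂ n, {y | SG f n y ≤ K} := by ext; simp [BE]
  rw [this]
  exact MeasurableSet.iUnion fun K => MeasurableSet.iInter fun n =>
    measurableSet_le (measurable_SG hf n) measurable_const

lemma BE_inv {b : ℕ} (f : SymbSpace b → ℝ) (y) : bigT b y ∈ BE f ↔ y ∈ BE f := by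
  constructor
  · rintro ⟨K, hK⟩
    obtain ⟨L, hL⟩ := exists_nat_ge (max 0 (y.2 0 + f y.1 + K))
    refine ⟨L, fun n => ?_⟩
    cases n with
    | zero => simp [SG]
    | succ n =>
      rw [SG_succ]
      have := hK n
      have := le_max_right 0 (y.2 0 + f y.1 + K)
      linarith
  · rintro ⟨K, hK⟩
    obtain ⟨L, hL⟩ := exists_nat_ge (K - (y.2 0 + f y.1))
    refine ⟨L, fun n => ?_⟩
    have := hK (n + 1)
    rw [SG_succ] at this
    linarith

/-- zero-one law for sections -/
lemma section_zero_one {b : ℕ} {f : SymbSpace b → ℝ}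
    (μ : Measure ℝ) [IsProbabilityMeasure μ] (x : SymbSpace b) :
    seqM μ {ξ | (x, ξ) ∈ BE f} = 0 ∨ seqM μ {ξ | (x, ξ) ∈ BE f} = 1 := by
  have hind : iIndepFun (fun (n : ℕ) (ξ : ℕ → ℝ) => ξ n) (seqM μ) :=
    iIndepFun_infinitePi (P := fun _ : ℕ => μ) (X := fun _ a => a) (fun _ => measurable_id)
  refine measure_zero_or_one_of_measurableSet_limsup_atTop
    (s := fun n => MeasurableSpace.comap (fun ξ : ℕ → ℝ => ξ n) inferInstance) ?_ ?_ ?_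
  · intro n
    exact (measurable_pi_apply n).comap_le
  · exact hind
  · rw [Filter.limsup_eq_iInf_iSup_of_nat]
    rw [MeasurableSpace.measurableSet_iInf]
    intro N
    have : {ξ : ℕ → ℝ | (x, ξ) ∈ BE f} = ⋃ K : ℕ, ⋂ n,
        {ξ | ∑ k ∈ Finset.range n, (ξ (N + k) + f ((shiftMap b)^[N + k] x)) ≤ K} := by
      ext ξ
      simp only [mem_ofPred_eq, mem_iUnion, mem_iInter]
      have key : ∀ (N : ℕ) (ξ : ℕ → ℝ) (x : SymbSpace b), (x, ξ) ∈ BE f ↔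
        ((shiftMap b)^[N] x, fun k => ξ (N + k)) ∈ BE f := by
        intro N
        induction N with
        | zero => intro ξ x; simp
        | succ N ih =>
          intro ξ x
          rw [← BE_inv, bigT, ih]
          simp only [Function.iterate_succ, Function.comp, tailSeq]
          have : ∀ k, N + 1 + k = N + k + 1 := by intro k; omega
          simp only [this]
      rw [key N]
      simp only [BE, SG, mem_ofPred_eq]
      simp only [← Function.iterate_add_apply]
      simp only [add_comm]
    rw [this]
    refine MeasurableSet.iUnion fun K => MeasurableSet.iInter fun n => ?_
    have hm : ∀ (m : MeasurableSpace (ℕ → ℝ)), (∀ k, Measurable[m] (fun ξ : ℕ → ℝ => ξ (N + k))) →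
        Measurable[m] (fun ξ : ℕ → ℝ =>
          ∑ k ∈ Finset.range n, (ξ (N + k) + f ((shiftMap b)^[N + k] x))) := by
      intro m hm
      refine Finset.measurable_sum _ fun k _ => ?_
      exact (hm k).add_const _
    refine hm _ (fun k => ?_) (measurableSet_Iic (a := (K : ℝ)))
    rw [measurable_iff_comap_le]
    exact le_iSup₂_of_le (N + k) (by omega) le_rfl

lemma BE_zero_one {b : ℕ} {f : SymbSpace b → ℝ} (hf : Measurable f)
    (ν : Measure (SymbSpace b)) [IsProbabilityMeasure ν] (hνerg : Ergodic (shiftMap b) ν)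
    (μ : Measure ℝ) [IsProbabilityMeasure μ] :
    (∀ᵐ y ∂(ν.prod (seqM μ)), y ∉ BE f) ∨ (∀ᵐ y ∂(ν.prod (seqM μ)), y ∈ BE f) := by
  set w : SymbSpace b → ℝ≥0∞ := fun x => seqM μ {ξ | (x, ξ) ∈ BE f} with hw
  have hwm : Measurable w := measurable_measure_prodMk_left (measurableSet_BE hf)
  have hinv : ∀ x, w (shiftMap b x) = w x := by
    intro x
    have : {ξ | (x, ξ) ∈ BE f} = tailSeq ⁻¹' {ξ | (shiftMap b x, ξ) ∈ BE f} := by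
      ext ξ
      simp only [mem_ofPred_eq, mem_preimage]
      exact (BE_inv f (x, ξ)).symm
    simp only [hw]
    rw [this, (mp_tailSeq μ).measure_preimage]
    exact (measurable_prodMk_left (measurableSet_BE hf)).nullMeasurableSet
  have hB : MeasurableSet {x | w x = 0} := hwm (measurableSet_singleton 0)
  have := hνerg.ae_mem_or_ae_notMem hB (by ext x; simp [hinv])
  rcases this with h | h
  · left
    rw [Measure.ae_prod_iff_ae_ae (measurableSet_BE hf).compl]
    filter_upwards [h] with x hx
    rw [ae_iff]; simpa using hx
  · right
    rw [Measure.ae_prod_iff_ae_ae (p := fun y => y ∈ BE f) (measurableSet_BE hf)]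
    filter_upwards [h] with x hx
    have h1 : w x = 1 := (section_zero_one μ x).resolve_left hx
    have := (prob_compl_eq_zero_iff (μ := seqM μ) (s := {ξ | (x, ξ) ∈ BE f})
      (measurable_prodMk_left (measurableSet_BE hf))).2 h1
    rw [ae_iff]; exact this

end

section

def resW {b : ℕ} (n : ℕ) (x : SymbSpace b) : Fin n → Fin b := fun i => x i

lemma measurable_resW {b : ℕ} (n : ℕ) : Measurable (resW (b := b) n) :=
  measurable_pi_lambda _ fun i => measurable_pi_apply (i : ℕ)

lemma resW_preimage {b n : ℕ} (u : Fin n → Fin b) :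
    resW n ⁻¹' {u} = cylinder (List.ofFn u) := by
  ext x
  simp only [mem_preimage, mem_singleton_iff, _root_.cylinder, mem_ofPred_eq]
  constructor
  · rintro rfl i
    simp [resW]
  · intro h
    funext i
    have := h ⟨i, by simp⟩
    simpa [resW] using this

lemma wordPrefix_eq {b : ℕ} (x : SymbSpace b) (n : ℕ) : wordPrefix x n = List.ofFn (resW n x) := rfl

lemma lintegral_resW {b : ℕ} (ν : Measure (SymbSpace b)) (n : ℕ)
    (φ : (Fin n → Fin b) → ℝ≥0∞) :
    ∫⁻ x, φ (resW n x) ∂ν = ∑ u, φ u * ν (cylinder (List.ofFn u)) := by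
  rw [← lintegral_map (f := φ) (measurable_of_finite _) (measurable_resW n), lintegral_fintype]
  refine Finset.sum_congr rfl fun u _ => ?_
  rw [Measure.map_apply (measurable_resW n) (measurableSet_singleton u), resW_preimage]

lemma integral_resW {b : ℕ} (ν : Measure (SymbSpace b)) [IsProbabilityMeasure ν] (n : ℕ)
    (φ : (Fin n → Fin b) → ℝ) :
    ∫ x, φ (resW n x) ∂ν = ∑ u, φ u * (ν (cylinder (List.ofFn u))).toReal := by
  have : IsProbabilityMeasure (ν.map (resW n)) :=
    Measure.isProbabilityMeasure_map (measurable_resW n).aemeasurable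
  rw [← integral_map (f := φ) (measurable_resW n).aemeasurable
    (measurable_of_finite _).aestronglyMeasurable, integral_fintype (Integrable.of_finite)]
  refine Finset.sum_congr rfl fun u _ => ?_
  rw [Measure.real, Measure.map_apply (measurable_resW n) (measurableSet_singleton u),
    resW_preimage, smul_eq_mul, mul_comm]

lemma integrable_resW {b : ℕ} (ν : Measure (SymbSpace b)) [IsProbabilityMeasure ν] (n : ℕ)
    (φ : (Fin n → Fin b) → ℝ) : Integrable (fun x => φ (resW n x)) ν := by
  have : IsProbabilityMeasure (ν.map (resW n)) :=
    Measure.isProbabilityMeasure_map (measurable_resW n).aemeasurable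
  have : Integrable φ (ν.map (resW n)) := Integrable.of_finite
  exact this.comp_measurable (measurable_resW n)

/-- log of cylinder mass -/
def logCyl {b : ℕ} (ν : Measure (SymbSpace b)) (n : ℕ) (x : SymbSpace b) : ℝ :=
  Real.log ((ν (cylinder (wordPrefix x n))).toReal)

lemma logCyl_nonpos {b : ℕ} (ν : Measure (SymbSpace b)) [IsProbabilityMeasure ν] (n : ℕ)
    (x : SymbSpace b) : logCyl ν n x ≤ 0 :=
  Real.log_nonpos ENNReal.toReal_nonneg (by
    have : ν (cylinder (wordPrefix x n)) ≤ 1 := prob_le_one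
    simpa using ENNReal.toReal_mono ENNReal.one_ne_top this)

lemma integrable_logCyl {b : ℕ} (ν : Measure (SymbSpace b)) [IsProbabilityMeasure ν] (n : ℕ) :
    Integrable (logCyl ν n) ν :=
  integrable_resW ν n (fun u => Real.log ((ν (cylinder (List.ofFn u))).toReal))

lemma integral_logCyl {b : ℕ} (ν : Measure (SymbSpace b)) [IsProbabilityMeasure ν] (n : ℕ)
    (hn : 1 ≤ n) : ∫ x, logCyl ν n x ∂ν = - (n * entropySeq ν n) := by
  have := integral_resW ν n (fun u => Real.log ((ν (cylinder (List.ofFn u))).toReal))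
  have h0 : (n : ℝ) ≠ 0 := by positivity
  rw [entropySeq, ← mul_assoc, mul_inv_cancel₀ h0, one_mul, Finset.sum_neg_distrib, neg_neg]
  refine this.trans (Finset.sum_congr rfl fun u _ => mul_comm _ _)

def UU {b : ℕ} (f : SymbSpace b → ℝ) (y : SymbSpace b × (ℕ → ℝ)) : ℝ :=
  (⨆ n, ENNReal.ofReal (SG f n y)).toReal

lemma UU_nonneg {b : ℕ} (f : SymbSpace b → ℝ) (y) : 0 ≤ UU f y := ENNReal.toReal_nonneg

lemma measurable_UU {b : ℕ} {f : SymbSpace b → ℝ} (hf : Measurable f) : Measurable (UU f) :=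
  (Measurable.iSup fun n => (measurable_SG hf n).ennreal_ofReal).ennreal_toReal

lemma UU_le {b : ℕ} {f : SymbSpace b → ℝ} {y} {K : ℝ} (hK : 0 ≤ K) (h : ∀ n, SG f n y ≤ K) :
    UU f y ≤ K := by
  refine ENNReal.toReal_le_of_le_ofReal hK (iSup_le fun n => ENNReal.ofReal_le_ofReal (h n))

lemma le_UU {b : ℕ} {f : SymbSpace b → ℝ} {y} (hy : y ∈ BE f) (n : ℕ) :
    SG f n y ≤ UU f y := by
  obtain ⟨K, hK⟩ := hy
  have hfin : (⨆ n, ENNReal.ofReal (SG f n y)) ≠ ∞ :=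
    ne_top_of_le_ne_top ENNReal.ofReal_ne_top
      (iSup_le fun n => ENNReal.ofReal_le_ofReal (hK n))
  have : (ENNReal.ofReal (SG f n y)).toReal ≤ UU f y :=
    ENNReal.toReal_mono hfin (le_iSup (fun n => ENNReal.ofReal (SG f n y)) n)
  exact (Real.le_coe_toNNReal _).trans this

def gg {b : ℕ} (f : SymbSpace b → ℝ) (y : SymbSpace b × (ℕ → ℝ)) : ℝ := y.2 0 + f y.1

lemma UU_rec {b : ℕ} {f : SymbSpace b → ℝ} {y} (hy : y ∈ BE f) :
    gg f y + UU f (bigT b y) ≤ UU f y := by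
  have : UU f (bigT b y) ≤ UU f y - gg f y := by
    refine UU_le ?_ ?_
    · have := le_UU hy 1
      simp [SG] at this
      simpa [gg] using this
    · intro n
      have := le_UU hy (n + 1)
      rw [SG_succ] at this
      unfold gg
      linarith
  linarith

def pp {b : ℕ} (f : SymbSpace b → ℝ) (y : SymbSpace b × (ℕ → ℝ)) : ℝ :=
  UU f y - gg f y - UU f (bigT b y)

lemma measurable_gg {b : ℕ} {f : SymbSpace b → ℝ} (hf : Measurable f) : Measurable (gg f) :=
  ((measurable_pi_apply 0).comp measurable_snd).add (hf.comp measurable_fst)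

lemma measurable_pp {b : ℕ} {f : SymbSpace b → ℝ} (hf : Measurable f) : Measurable (pp f) :=
  ((measurable_UU hf).sub (measurable_gg hf)).sub ((measurable_UU hf).comp (measurable_bigT b))

lemma sum_pp {b : ℕ} {f : SymbSpace b → ℝ} (n : ℕ) : ∀ y,
    ∑ k ∈ Finset.range n, pp f ((bigT b)^[k] y) + SG f n y = UU f y - UU f ((bigT b)^[n] y) := by
  induction n with
  | zero => intro y; simp [SG]
  | succ n ih =>
    intro y
    rw [Finset.sum_range_succ', SG_succ]
    have := ih (bigT b y)
    simp only [Function.iterate_succ, Function.comp, Function.iterate_zero, id]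
    simp only [pp, gg] at this ⊢
    linarith

lemma BE_iter {b : ℕ} {f : SymbSpace b → ℝ} {y} (hy : y ∈ BE f) (k : ℕ) :
    (bigT b)^[k] y ∈ BE f := by
  induction k with
  | zero => exact hy
  | succ k ih => rw [Function.iterate_succ', Function.comp, BE_inv]; exact ih

def qq {b : ℕ} (f : SymbSpace b → ℝ) (y : SymbSpace b × (ℕ → ℝ)) : ℝ :=
  max 0 (min (pp f y) 1)

lemma measurable_qq {b : ℕ} {f : SymbSpace b → ℝ} (hf : Measurable f) : Measurable (qq f) :=
  measurable_const.max ((measurable_pp hf).min measurable_const)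

lemma integrable_qq {b : ℕ} {f : SymbSpace b → ℝ} (hf : Measurable f)
    (ρ : Measure (SymbSpace b × (ℕ → ℝ))) [IsProbabilityMeasure ρ] : Integrable (qq f) ρ := by
  refine Integrable.of_bound (measurable_qq hf).aestronglyMeasurable 1 (ae_of_all _ fun y => ?_)
  rw [Real.norm_eq_abs, abs_of_nonneg (le_max_left _ _)]
  exact max_le zero_le_one (min_le_right _ _)

lemma sum_qq_le {b : ℕ} {f : SymbSpace b → ℝ} {y} (hy : y ∈ BE f) (n : ℕ) :
    ∑ k ∈ Finset.range n, qq f ((bigT b)^[k] y) + SG f n y ≤ UU f y := by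
  have h1 := sum_pp (f := f) n y
  have h2 := UU_nonneg f ((bigT b)^[n] y)
  have h3 : ∑ k ∈ Finset.range n, qq f ((bigT b)^[k] y) ≤
      ∑ k ∈ Finset.range n, pp f ((bigT b)^[k] y) := by
    refine Finset.sum_le_sum fun k _ => ?_
    have := UU_rec (BE_iter hy k)
    have h0 : 0 ≤ pp f ((bigT b)^[k] y) := by unfold pp; linarith
    exact max_le h0 (min_le_left _ _)
  linarith

lemma mp_integral {α β : Type*} [MeasurableSpace α] [MeasurableSpace β] {m1 : Measure α}
    {m2 : Measure β} {g : α → β} (h : MeasurePreserving g m1 m2) {φ : β → ℝ}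
    (hφ : AEStronglyMeasurable φ m2) : ∫ x, φ (g x) ∂m1 = ∫ z, φ z ∂m2 := by
  have := h.map_eq
  subst this
  exact (integral_map h.aemeasurable hφ).symm

lemma integrable_coord {b : ℕ} (ν : Measure (SymbSpace b)) [IsProbabilityMeasure ν]
    (μ : Measure ℝ) [IsProbabilityMeasure μ] (k : ℕ) {φ : ℝ → ℝ} (h : Integrable φ μ) :
    Integrable (fun y : SymbSpace b × (ℕ → ℝ) => φ (y.2 k)) (ν.prod (seqM μ)) := by
  have h1 : MeasurePreserving (fun y : SymbSpace b × (ℕ → ℝ) => y.2 k) (ν.prod (seqM μ)) μ :=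
    (measurePreserving_eval_infinitePi (fun _ : ℕ => μ) k).comp measurePreserving_snd
  exact h1.integrable_comp_of_integrable h

lemma integral_coord {b : ℕ} (ν : Measure (SymbSpace b)) [IsProbabilityMeasure ν]
    (μ : Measure ℝ) [IsProbabilityMeasure μ] (k : ℕ) {φ : ℝ → ℝ} (h : Integrable φ μ) :
    ∫ y : SymbSpace b × (ℕ → ℝ), φ (y.2 k) ∂(ν.prod (seqM μ)) = ∫ a, φ a ∂μ := by
  have h1 : MeasurePreserving (fun y : SymbSpace b × (ℕ → ℝ) => y.2 k) (ν.prod (seqM μ)) μ :=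
    (measurePreserving_eval_infinitePi (fun _ : ℕ => μ) k).comp measurePreserving_snd
  exact mp_integral h1 h.aestronglyMeasurable

lemma integral_min_bound {b : ℕ} {f : SymbSpace b → ℝ}
    (ν : Measure (SymbSpace b)) [IsProbabilityMeasure ν] (hνerg : Ergodic (shiftMap b) ν)
    (hG : PropertyG ν f)
    (μ : Measure ℝ) [IsProbabilityMeasure μ] (hInt : Integrable (fun a => a) μ)
    (hBE : ∀ᵐ y ∂(ν.prod (seqM μ)), y ∈ BE f) :
    ∃ B : SymbSpace b × (ℕ → ℝ) → ℝ, Measurable B ∧ (∀ y, 0 ≤ B y) ∧ ∀ (L n : ℕ), 1 ≤ n →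
      ∫ y, qq f y ∂(ν.prod (seqM μ)) + ∫ a, a ∂μ - entropySeq ν n ≤
        ∫ y, min (B y / n) (1 + L) ∂(ν.prod (seqM μ)) + ∫ a, max (a - L) 0 ∂μ := by
  obtain ⟨hf, C, hCm, hC1, hC⟩ := hG
  set ρ := ν.prod (seqM μ) with hρ
  have hT := mp_bigT ν hνerg.toMeasurePreserving μ
  let B : SymbSpace b × (ℕ → ℝ) → ℝ := fun y => UU f y + Real.log (max 1 (C y.1))
  have hBm : Measurable B :=
    (measurable_UU hf).add (measurable_const.max (hCm.comp measurable_fst)).log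
  have hB0 : ∀ y, 0 ≤ B y := fun y =>
    add_nonneg (UU_nonneg f y) (Real.log_nonneg (le_max_left _ _))
  refine ⟨B, hBm, hB0, fun L n hn => ?_⟩
  have hn0 : (0 : ℝ) < n := by exact_mod_cast hn
  have hposint : Integrable (fun a : ℝ => max (a - L) 0) μ := by
    exact (hInt.sub (integrable_const (L : ℝ))).pos_part
  let ψ : SymbSpace b × (ℕ → ℝ) → ℝ := fun y =>
    ∑ k ∈ Finset.range n, qq f ((bigT b)^[k] y) + ∑ k ∈ Finset.range n, y.2 k + logCyl ν n y.1
  let θ : SymbSpace b × (ℕ → ℝ) → ℝ := fun y =>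
    n * min (B y / n) (1 + L) + ∑ k ∈ Finset.range n, max (y.2 k - L) 0
  have hmint : Integrable (fun y => min (B y / n) (1 + (L : ℝ))) ρ := by
    refine Integrable.of_bound
      ((hBm.div_const _).min measurable_const).aestronglyMeasurable (1 + L) (ae_of_all _ fun y => ?_)
    rw [Real.norm_eq_abs, abs_of_nonneg (le_min (div_nonneg (hB0 y) hn0.le) (by positivity))]
    exact min_le_right _ _
  have hq : ∀ k, Integrable (fun y => qq f ((bigT b)^[k] y)) ρ := fun k =>
    (hT.iterate k).integrable_comp_of_integrable (integrable_qq hf ρ)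
  have hqi : ∀ k, ∫ y, qq f ((bigT b)^[k] y) ∂ρ = ∫ y, qq f y ∂ρ := by
    intro k
    exact mp_integral (hT.iterate k) (measurable_qq hf).aestronglyMeasurable
  have hlc : Integrable (fun y : SymbSpace b × (ℕ → ℝ) => logCyl ν n y.1) ρ :=
    (measurePreserving_fst (μ := ν) (ν := seqM μ)).integrable_comp_of_integrable
      (integrable_logCyl ν n)
  have hlci : ∫ y, logCyl ν n y.1 ∂ρ = - (n * entropySeq ν n) := by
    rw [← integral_logCyl ν n hn]
    exact mp_integral (measurePreserving_fst (μ := ν) (ν := seqM μ)) (integrable_logCyl ν n).1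
  have hc1 : ∀ k, Integrable (fun y : SymbSpace b × (ℕ → ℝ) => y.2 k) ρ :=
    fun k => integrable_coord ν μ k hInt
  have hc2 : ∀ k, Integrable (fun y : SymbSpace b × (ℕ → ℝ) => max (y.2 k - L) 0) ρ :=
    fun k => integrable_coord ν μ k hposint
  have hs1 : Integrable (fun y => ∑ k ∈ Finset.range n, qq f ((bigT b)^[k] y)) ρ :=
    integrable_finsetSum _ fun k _ => hq k
  have hs2 : Integrable (fun y : SymbSpace b × (ℕ → ℝ) => ∑ k ∈ Finset.range n, y.2 k) ρ :=
    integrable_finsetSum _ fun k _ => integrable_coord ν μ k hInt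
  have hs3 : Integrable (fun y : SymbSpace b × (ℕ → ℝ) =>
      ∑ k ∈ Finset.range n, max (y.2 k - L) 0) ρ :=
    integrable_finsetSum _ fun k _ => integrable_coord ν μ k hposint
  have hψi : Integrable ψ ρ := (hs1.add hs2).add hlc
  have hθi : Integrable θ ρ := (hmint.const_mul _).add hs3
  have hψ : ∫ y, ψ y ∂ρ = n * (∫ y, qq f y ∂ρ + ∫ a, a ∂μ - entropySeq ν n) := by
    have e1 : ∫ y, ψ y ∂ρ = ∫ y, (∑ k ∈ Finset.range n, qq f ((bigT b)^[k] y) +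
      ∑ k ∈ Finset.range n, y.2 k) ∂ρ + ∫ y, logCyl ν n y.1 ∂ρ := integral_add (hs1.add hs2) hlc
    rw [e1, integral_add hs1 hs2, integral_finsetSum _ (fun k _ => hq k),
      integral_finsetSum _ (fun k _ => hc1 k), hlci]
    have : ∀ k, ∫ y : SymbSpace b × (ℕ → ℝ), y.2 k ∂ρ = ∫ a, a ∂μ :=
      fun k => integral_coord ν μ k hInt
    simp only [this, hqi, Finset.sum_const, Finset.card_range, nsmul_eq_mul]
    ring
  have hθ : ∫ y, θ y ∂ρ = n * (∫ y, min (B y / n) (1 + L) ∂ρ + ∫ a, max (a - L) 0 ∂μ) := by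
    have e1 : ∫ y, θ y ∂ρ = ∫ y, n * min (B y / n) (1 + L) ∂ρ +
      ∫ y, ∑ k ∈ Finset.range n, max (y.2 k - L) 0 ∂ρ := integral_add (hmint.const_mul _) hs3
    rw [e1, integral_const_mul,
      integral_finsetSum _ (fun k _ => hc2 k)]
    have : ∀ k, ∫ y : SymbSpace b × (ℕ → ℝ), max (y.2 k - L) 0 ∂ρ = ∫ a, max (a - L) 0 ∂μ :=
      fun k => integral_coord ν μ k hposint
    simp only [this, Finset.sum_const, Finset.card_range, nsmul_eq_mul]
    ring
  have hle : ∀ᵐ y ∂ρ, ψ y ≤ θ y := by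
    have hCy : ∀ᵐ y ∂ρ, 1 ≤ C y.1 :=
      (measurePreserving_fst (μ := ν) (ν := seqM μ)).quasiMeasurePreserving.ae hC1
    have hCy2 := (measurePreserving_fst (μ := ν) (ν := seqM μ)).quasiMeasurePreserving.ae hC
    filter_upwards [hBE, hCy, hCy2] with y hy h1 h2
    have h2n := h2 n hn
    have hC0 : 0 < C y.1 := by linarith
    have hpos : 0 < (ν (cylinder (wordPrefix y.1 n))).toReal :=
      lt_of_lt_of_le (by positivity) h2n.1
    have hlog : logCyl ν n y.1 ≤ Real.log (max 1 (C y.1)) +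
        ∑ k ∈ Finset.range n, f ((shiftMap b)^[k] y.1) := by
      rw [max_eq_right h1]
      have := Real.log_le_log hpos h2n.2
      rwa [Real.log_mul hC0.ne' (Real.exp_pos _).ne', Real.log_exp] at this
    have hsum := sum_qq_le hy n
    have hSG : SG f n y = ∑ k ∈ Finset.range n, y.2 k +
        ∑ k ∈ Finset.range n, f ((shiftMap b)^[k] y.1) := by
      unfold SG; rw [Finset.sum_add_distrib]
    have hA : ψ y ≤ B y := by
      simp only [ψ, B]; linarith
    have hQ0 : 0 ≤ ∑ k ∈ Finset.range n, max (y.2 k - L) 0 :=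
      Finset.sum_nonneg fun k _ => le_max_right _ _
    have hq1 : ∑ k ∈ Finset.range n, qq f ((bigT b)^[k] y) ≤ n := by
      have : ∑ k ∈ Finset.range n, qq f ((bigT b)^[k] y) ≤ ∑ k ∈ Finset.range n, (1 : ℝ) :=
        Finset.sum_le_sum fun k _ => max_le zero_le_one (min_le_right _ _)
      simpa using this
    have hx1 : ∑ k ∈ Finset.range n, y.2 k ≤ n * L + ∑ k ∈ Finset.range n, max (y.2 k - L) 0 := by
      have : ∑ k ∈ Finset.range n, y.2 k ≤ ∑ k ∈ Finset.range n, (L + max (y.2 k - L) 0) :=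
        Finset.sum_le_sum fun k _ => by have := le_max_left (y.2 k - L) 0; linarith
      rw [Finset.sum_add_distrib] at this
      simpa using this
    have hBb : ψ y ≤ n * (1 + L) + ∑ k ∈ Finset.range n, max (y.2 k - L) 0 := by
      have := logCyl_nonpos ν n y.1
      simp only [ψ]; linarith
    simp only [θ]
    rw [mul_min_of_nonneg _ _ hn0.le, mul_div_cancel₀ _ hn0.ne']
    rcases min_cases (B y) (n * (1 + L : ℝ)) with h | h <;> rw [h.1] <;> linarith
  have := integral_mono_ae hψi hθi hle
  rw [hψ, hθ] at this
  exact le_of_mul_le_mul_left this hn0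

lemma qq_zero {b : ℕ} {f : SymbSpace b → ℝ}
    (ν : Measure (SymbSpace b)) [IsProbabilityMeasure ν] (hνerg : Ergodic (shiftMap b) ν)
    (hG : PropertyG ν f)
    (μ : Measure ℝ) [IsProbabilityMeasure μ] (hInt : Integrable (fun a => a) μ)
    (hent : Tendsto (entropySeq ν) atTop (nhds (∫ a, a ∂μ)))
    (hBE : ∀ᵐ y ∂(ν.prod (seqM μ)), y ∈ BE f) :
    ∀ᵐ y ∂(ν.prod (seqM μ)), UU f y = gg f y + UU f (bigT b y) := by
  obtain ⟨B, hBm, hB0, hB⟩ := integral_min_bound ν hνerg hG μ hInt hBE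
  set ρ := ν.prod (seqM μ) with hρ
  have h1 : ∀ L : ℕ, ∫ y, qq f y ∂ρ ≤ ∫ a, max (a - L) 0 ∂μ := by
    intro L
    have ht : Tendsto (fun n : ℕ => ∫ y, min (B y / n) (1 + L) ∂ρ) atTop
        (nhds (∫ y, (0 : ℝ) ∂ρ)) := by
      refine tendsto_integral_of_dominated_convergence (fun _ => 1 + L) ?_ (integrable_const _)
        ?_ ?_
      · intro n
        exact ((hBm.div_const _).min measurable_const).aestronglyMeasurable
      · intro n
        refine ae_of_all _ fun y => ?_
        rw [Real.norm_eq_abs, abs_of_nonneg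
          (le_min (div_nonneg (hB0 y) (Nat.cast_nonneg n)) (by positivity))]
        exact min_le_right _ _
      · refine ae_of_all _ fun y => ?_
        have h1 : Tendsto (fun n : ℕ => B y / n) atTop (nhds 0) :=
          tendsto_const_div_atTop_nhds_zero_nat _
        have := h1.min (tendsto_const_nhds (x := (1 + L : ℝ)))
        rwa [min_eq_left (by positivity)] at this
    rw [integral_zero] at ht
    have hl := (tendsto_const_nhds (x := ∫ y, qq f y ∂ρ + ∫ a, a ∂μ)).sub hent
    have hr := ht.add (tendsto_const_nhds (x := ∫ a, max (a - L) 0 ∂μ))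
    have := le_of_tendsto_of_tendsto hl hr (by
      filter_upwards [eventually_ge_atTop 1] with n hn using hB L n hn)
    linarith
  have h2 : Tendsto (fun L : ℕ => ∫ a, max (a - L) 0 ∂μ) atTop (nhds (∫ a : ℝ, (0 : ℝ) ∂μ)) := by
    refine tendsto_integral_of_dominated_convergence (fun a => |a|) ?_ hInt.abs ?_ ?_
    · intro n
      exact ((measurable_id.sub_const _).max measurable_const).aestronglyMeasurable
    · intro n
      refine ae_of_all _ fun a => ?_
      rw [Real.norm_eq_abs, abs_of_nonneg (le_max_right _ _)]
      refine max_le ?_ (abs_nonneg _)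
      have := le_abs_self a
      have : (0 : ℝ) ≤ n := Nat.cast_nonneg n
      linarith
    · refine ae_of_all _ fun a => ?_
      obtain ⟨N, hN⟩ := exists_nat_ge a
      refine tendsto_const_nhds.congr' ?_
      filter_upwards [eventually_ge_atTop N] with n hn
      have : (N : ℝ) ≤ n := by exact_mod_cast hn
      rw [max_eq_right]; linarith
  rw [integral_zero] at h2
  have h3 : ∫ y, qq f y ∂ρ ≤ 0 := ge_of_tendsto' h2 h1
  have h4 : ∫ y, qq f y ∂ρ = 0 :=
    le_antisymm h3 (integral_nonneg fun y => le_max_left _ _)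
  rw [integral_eq_zero_iff_of_nonneg (f := qq f) (fun y => le_max_left _ _) (integrable_qq hG.1 ρ)] at h4
  filter_upwards [h4, hBE] with y hy hyB
  have h5 := UU_rec hyB
  have hy' : max 0 (min (pp f y) 1) = 0 := hy
  have h6 : min (pp f y) 1 ≤ 0 := by
    rw [← hy']; exact le_max_right _ _
  have h7 : pp f y ≤ 0 := by
    rcases min_le_iff.1 h6 with h | h
    · exact h
    · norm_num at h
  unfold pp at h7
  linarith

end

section

lemma sq_integral_le {α : Type*} [MeasurableSpace α] (μ : Measure α) [IsProbabilityMeasure μ]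
    {w : α → ℝ} (hw : MemLp w 2 μ) : (∫ a, w a ∂μ) ^ 2 ≤ ∫ a, w a ^ 2 ∂μ := by
  have h1 := variance_eq_sub hw
  have h2 := variance_nonneg w μ
  have h3 : μ[w ^ 2] = ∫ a, w a ^ 2 ∂μ := rfl
  linarith

lemma sq_integral_lt {α : Type*} [MeasurableSpace α] (μ : Measure α) [IsProbabilityMeasure μ]
    {w : α → ℝ} (hw : MemLp w 2 μ) (hnd : ¬ ∃ c, ∀ᵐ a ∂μ, w a = c) :
    (∫ a, w a ∂μ) ^ 2 < ∫ a, w a ^ 2 ∂μ := by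
  have h1 := variance_eq_sub hw
  have h2 := variance_nonneg w μ
  have h3 : μ[w ^ 2] = ∫ a, w a ^ 2 ∂μ := rfl
  rcases h2.lt_or_eq with h | h
  · linarith
  · exfalso
    apply hnd
    have h4 : evariance w μ = 0 := by
      rw [← hw.ofReal_variance_eq, ← h]; simp
    rw [evariance_eq_zero_iff hw.aestronglyMeasurable.aemeasurable] at h4
    exact ⟨_, h4⟩

lemma nondeg {b : ℕ} {f : SymbSpace b → ℝ}
    (ν : Measure (SymbSpace b)) [IsProbabilityMeasure ν] (hνerg : Ergodic (shiftMap b) ν)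
    (hG : PropertyG ν f)
    (μ : Measure ℝ) [IsProbabilityMeasure μ] (hInt : Integrable (fun a => a) μ)
    (hexp : Integrable (fun a => Real.exp (-a)) μ)
    (hent : Tendsto (entropySeq ν) atTop (nhds (∫ a, a ∂μ)))
    (hnd : ¬ ∃ c, ∀ᵐ a ∂μ, a = c) :
    ∀ᵐ y ∂(ν.prod (seqM μ)), y ∉ BE f := by
  rcases BE_zero_one hG.1 ν hνerg μ with h | hBE
  · exact h
  exfalso
  have hf := hG.1
  have hU := qq_zero ν hνerg hG μ hInt hent hBE
  have hUm := measurable_UU hf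
  let e1 : SymbSpace b × (ℕ → ℝ) → ℝ := fun y => Real.exp (-(UU f y) / 2)
  let e2 : SymbSpace b × (ℕ → ℝ) → ℝ := fun y => Real.exp (-(UU f y))
  have he1m : Measurable e1 := (hUm.neg.div_const _).exp
  have he2m : Measurable e2 := hUm.neg.exp
  have he1p : ∀ y, 0 < e1 y := fun y => Real.exp_pos _
  have he2p : ∀ y, 0 < e2 y := fun y => Real.exp_pos _
  have he1l : ∀ y, e1 y ≤ 1 := fun y => Real.exp_le_one_iff.2 (by
    have := UU_nonneg f y; linarith)
  have he2l : ∀ y, e2 y ≤ 1 := fun y => Real.exp_le_one_iff.2 (by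
    have := UU_nonneg f y; linarith)
  have hsq : ∀ y, e1 y ^ 2 = e2 y := by
    intro y; simp only [e1, e2]; rw [← Real.exp_nat_mul]; congr 1; push_cast; ring
  let G1 : SymbSpace b → ℝ := fun x => ∫ ξ, e1 (x, ξ) ∂(seqM μ)
  let G2 : SymbSpace b → ℝ := fun x => ∫ ξ, e2 (x, ξ) ∂(seqM μ)
  have hG1m : Measurable G1 := (he1m.stronglyMeasurable.integral_prod_right).measurable
  have hG2m : Measurable G2 := (he2m.stronglyMeasurable.integral_prod_right).measurable
  have hi1m : ∀ x, Measurable (fun ξ => e1 (x, ξ)) := fun x => he1m.comp measurable_prodMk_left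
  have hi2m : ∀ x, Measurable (fun ξ => e2 (x, ξ)) := fun x => he2m.comp measurable_prodMk_left
  have hi1 : ∀ x, Integrable (fun ξ => e1 (x, ξ)) (seqM μ) := fun x =>
    Integrable.of_bound (hi1m x).aestronglyMeasurable 1 (ae_of_all _ fun ξ => by
      rw [Real.norm_eq_abs, abs_of_pos (he1p _)]; exact he1l _)
  have hi2 : ∀ x, Integrable (fun ξ => e2 (x, ξ)) (seqM μ) := fun x =>
    Integrable.of_bound (hi2m x).aestronglyMeasurable 1 (ae_of_all _ fun ξ => by
      rw [Real.norm_eq_abs, abs_of_pos (he2p _)]; exact he2l _)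
  have hpos : ∀ (w : (ℕ → ℝ) → ℝ), (∀ ξ, 0 < w ξ) → Integrable w (seqM μ) →
      0 < ∫ ξ, w ξ ∂(seqM μ) := by
    intro w hw hwi
    rw [integral_pos_iff_support_of_nonneg (fun ξ => (hw ξ).le) hwi]
    have : Function.support w = univ := by
      ext ξ; simp [(hw ξ).ne']
    rw [this]; simp
  have hG1p : ∀ x, 0 < G1 x := fun x => hpos _ (fun ξ => he1p _) (hi1 x)
  have hG2p : ∀ x, 0 < G2 x := fun x => hpos _ (fun ξ => he2p _) (hi2 x)
  have hG12 : ∀ x, G1 x ^ 2 ≤ G2 x := by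
    intro x
    have hm : MemLp (fun ξ => e1 (x, ξ)) 2 (seqM μ) := by
      rw [memLp_two_iff_integrable_sq (hi1m x).aestronglyMeasurable]
      simpa only [hsq] using hi2 x
    have := sq_integral_le (seqM μ) hm
    simpa only [hsq] using this
  -- moments of μ
  set m1 : ℝ := ∫ a, Real.exp (-a / 2) ∂μ with hm1
  set m2 : ℝ := ∫ a, Real.exp (-a) ∂μ with hm2
  have hsqa : ∀ a : ℝ, Real.exp (-a / 2) ^ 2 = Real.exp (-a) := by
    intro a; rw [← Real.exp_nat_mul]; congr 1; push_cast; ring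
  have hmlt : m1 ^ 2 < m2 := by
    have hm : MemLp (fun a : ℝ => Real.exp (-a / 2)) 2 μ := by
      rw [memLp_two_iff_integrable_sq (by fun_prop)]
      simpa only [hsqa] using hexp
    have := sq_integral_lt μ hm (by
      rintro ⟨c, hc⟩
      apply hnd
      refine ⟨-2 * Real.log c, ?_⟩
      filter_upwards [hc] with a ha
      rw [← ha, Real.log_exp]; ring)
    simpa only [hsqa] using this
  have hm2p : 0 < m2 := lt_of_le_of_lt (sq_nonneg _) hmlt
  -- recursion
  have hUx : ∀ᵐ x ∂ν, ∀ᵐ ξ ∂(seqM μ), UU f (x, ξ) = gg f (x, ξ) + UU f (bigT b (x, ξ)) :=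
    Measure.ae_ae_of_ae_prod hU
  have hrec : ∀ᵐ x ∂ν, G1 x ^ 2 / G2 x =
      m1 ^ 2 / m2 * (G1 (shiftMap b x) ^ 2 / G2 (shiftMap b x)) := by
    filter_upwards [hUx] with x hx
    have r1 : G1 x = Real.exp (-(f x) / 2) * (m1 * G1 (shiftMap b x)) := by
      rw [← integral_cons_mul μ (fun a => Real.exp (-a / 2)) (fun ξ => e1 (shiftMap b x, ξ))
        (by fun_prop) (hi1m _), ← integral_const_mul]
      refine integral_congr_ae ?_
      filter_upwards [hx] with ξ hξ
      simp only [e1, hξ, ← Real.exp_add, gg, bigT]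
      congr 1; ring
    have r2 : G2 x = Real.exp (-(f x)) * (m2 * G2 (shiftMap b x)) := by
      rw [← integral_cons_mul μ (fun a => Real.exp (-a)) (fun ξ => e2 (shiftMap b x, ξ))
        (by fun_prop) (hi2m _), ← integral_const_mul]
      refine integral_congr_ae ?_
      filter_upwards [hx] with ξ hξ
      simp only [e2, hξ, ← Real.exp_add, gg, bigT]
      congr 1; ring
    rw [r1, r2, mul_pow, mul_pow, hsqa]
    have := Real.exp_pos (-(f x))
    have := hG2p (shiftMap b x)
    field_simp
  let R : SymbSpace b → ℝ := fun x => G1 x ^ 2 / G2 x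
  have hRm : Measurable R := (hG1m.pow_const 2).div hG2m
  have hRp : ∀ x, 0 < R x := fun x => div_pos (pow_pos (hG1p x) 2) (hG2p x)
  have hRl : ∀ x, R x ≤ 1 := fun x => (div_le_one (hG2p x)).2 (hG12 x)
  have hRi : Integrable R ν := Integrable.of_bound hRm.aestronglyMeasurable 1 (ae_of_all _ fun x => by
      rw [Real.norm_eq_abs, abs_of_pos (hRp _)]; exact hRl _)
  have hRint : ∫ x, R x ∂ν = m1 ^ 2 / m2 * ∫ x, R x ∂ν := by
    have h1 : ∫ x, R x ∂ν = ∫ x, m1 ^ 2 / m2 * R (shiftMap b x) ∂ν := integral_congr_ae hrec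
    rw [integral_const_mul, mp_integral hνerg.toMeasurePreserving hRm.aestronglyMeasurable] at h1
    exact h1
  have hRpos : 0 < ∫ x, R x ∂ν := by
    rw [integral_pos_iff_support_of_nonneg (fun ξ => (hRp ξ).le) hRi]
    have : Function.support R = univ := by
      ext ξ; simp [(hRp ξ).ne']
    rw [this]; simp
  have : m1 ^ 2 / m2 < 1 := (div_lt_one hm2p).2 hmlt
  nlinarith

/-- Unboundedness along the path, nondegenerate case. -/
lemma nondeg_path {b : ℕ} {f : SymbSpace b → ℝ}
    (ν : Measure (SymbSpace b)) [IsProbabilityMeasure ν]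
    (hG : PropertyG ν f)
    (μ : Measure ℝ) [IsProbabilityMeasure μ]
    (hBE : ∀ᵐ y ∂(ν.prod (seqM μ)), y ∉ BE f) :
    ∀ᵐ y ∂(ν.prod (seqM μ)), ∀ K : ℝ, ∃ n, 1 ≤ n ∧
      K ≤ Real.exp (∑ k ∈ Finset.range n, y.2 k) * (ν (cylinder (wordPrefix y.1 n))).toReal := by
  obtain ⟨hf, C, hCm, hC1, hC⟩ := hG
  have hCy : ∀ᵐ y ∂(ν.prod (seqM μ)), 1 ≤ C y.1 :=
    (measurePreserving_fst (μ := ν) (ν := seqM μ)).quasiMeasurePreserving.ae hC1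
  have hCy2 := (measurePreserving_fst (μ := ν) (ν := seqM μ)).quasiMeasurePreserving.ae hC
  filter_upwards [hBE, hCy, hCy2] with y hy h1 h2 K
  have hC0 : 0 < C y.1 := by linarith
  obtain ⟨L, hL⟩ := exists_nat_ge (Real.log (max K 1 * C y.1))
  simp only [BE, mem_ofPred_eq, not_exists, not_forall, not_le] at hy
  obtain ⟨n, hn⟩ := hy L
  have hn1 : 1 ≤ n := by
    rcases Nat.eq_zero_or_pos n with h | h
    · subst h
      simp [SG] at hn
      exact absurd hn (by have : (0 : ℝ) ≤ L := Nat.cast_nonneg L; linarith)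
    · exact h
  refine ⟨n, hn1, ?_⟩
  have hlow := (h2 n hn1).1
  have hK0 : 0 < max K 1 := lt_max_of_lt_right one_pos
  have h3 : max K 1 * C y.1 ≤ Real.exp (SG f n y) := by
    rw [← Real.log_le_iff_le_exp (by positivity)]
    linarith
  have hSG : SG f n y = ∑ k ∈ Finset.range n, y.2 k +
        ∑ k ∈ Finset.range n, f ((shiftMap b)^[k] y.1) := by
      unfold SG; rw [Finset.sum_add_distrib]
  rw [hSG, Real.exp_add] at h3
  calc K ≤ max K 1 := le_max_left _ _
    _ = (max K 1 * C y.1) * (C y.1)⁻¹ := by field_simp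
    _ ≤ (Real.exp (∑ k ∈ Finset.range n, y.2 k) *
        Real.exp (∑ k ∈ Finset.range n, f ((shiftMap b)^[k] y.1))) * (C y.1)⁻¹ := by gcongr
    _ = Real.exp (∑ k ∈ Finset.range n, y.2 k) *
        ((C y.1)⁻¹ * Real.exp (∑ k ∈ Finset.range n, f ((shiftMap b)^[k] y.1))) := by ring
    _ ≤ _ := by gcongr

end

section

@[reducible] def casSig {b : ℕ} {Ω : Type*} (X : List (Fin b) → Ω → ℝ) (S : Set {w : List (Fin b) // w ≠ []}) :
    MeasurableSpace Ω :=
  ⨆ w ∈ S, MeasurableSpace.comap (X w.1) inferInstance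

lemma casSig_le {b : ℕ} {Ω : Type*} [mΩ : MeasurableSpace Ω] {X : List (Fin b) → Ω → ℝ}
    (hm : ∀ w, Measurable (X w)) (S) : casSig X S ≤ mΩ :=
  iSup₂_le fun w _ => (hm w.1).comap_le

lemma casSig_mono {b : ℕ} {Ω : Type*} {X : List (Fin b) → Ω → ℝ} {S T} (h : S ⊆ T) :
    casSig X S ≤ casSig X T := biSup_mono fun _ hw => h hw

lemma casSig_meas {b : ℕ} {Ω : Type*} {X : List (Fin b) → Ω → ℝ} {S}
    (w : {w : List (Fin b) // w ≠ []}) (h : w ∈ S) : Measurable[casSig X S] (X w.1) := by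
  rw [measurable_iff_comap_le]
  exact le_iSup₂_of_le w h le_rfl

lemma casSig_indep {b : ℕ} {Ω : Type*} [mΩ : MeasurableSpace Ω] {P : Measure Ω}
    [IsProbabilityMeasure P] {X : List (Fin b) → Ω → ℝ} {X₀ : Ω → ℝ}
    (hM1 : CascadeM1 P X X₀) {S T} (h : Disjoint S T) : Indep (casSig X S) (casSig X T) P :=
  indep_iSup_of_disjoint (m := fun w : {w : List (Fin b) // w ≠ []} =>
    MeasurableSpace.comap (X w.1) inferInstance) (fun w => (hM1.meas w.1).comap_le)
    ((iIndepFun_iff_iIndep ..).1 hM1.indep) h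

def lenLe (b n : ℕ) : Set {w : List (Fin b) // w ≠ []} := {w | w.1.length ≤ n}
def lenEq (b n : ℕ) : Set {w : List (Fin b) // w ≠ []} := {w | w.1.length = n}

lemma len_disj (b n : ℕ) : Disjoint (lenLe b n) (lenEq b (n + 1)) := by
  rw [Set.disjoint_left]
  intro w h1 h2
  have h1' : w.1.length ≤ n := h1
  have h2' : w.1.length = n + 1 := h2
  omega

def casFil {b : ℕ} {Ω : Type*} [mΩ : MeasurableSpace Ω] (X : List (Fin b) → Ω → ℝ)
    (hm : ∀ w, Measurable (X w)) : Filtration ℕ mΩ where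
  seq n := casSig X (lenLe b n)
  mono' i j h := casSig_mono fun w hw => le_trans (show w.1.length ≤ i from hw) h
  le' n := casSig_le hm _

lemma cascadeY_meas {b : ℕ} {Ω : Type*} {X : List (Fin b) → Ω → ℝ} {n : ℕ} (w : List (Fin b))
    (hw : w.length ≤ n) : Measurable[casSig X (lenLe b n)] (cascadeY X w) := by
  have : ∀ (m : MeasurableSpace Ω), (∀ k ∈ Finset.range w.length, Measurable[m] (X (w.take (k+1)))) →
      Measurable[m] (cascadeY X w) := by
    intro m h
    exact Finset.measurable_prod _ h
  refine this _ fun k hk => ?_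
  rw [Finset.mem_range] at hk
  refine casSig_meas ⟨w.take (k + 1), ?_⟩ ?_
  · intro h
    have := congrArg List.length h
    simp at this
    subst this; simp at hk
  · show (w.take (k + 1)).length ≤ n
    simp; omega

lemma take_ofFn {b n : ℕ} (v : Fin (n + 1) → Fin b) :
    (List.ofFn v).take n = List.ofFn (Fin.init v) := by
  rw [List.ofFn_succ', List.concat_eq_append, List.take_append_of_le_length (by simp)]
  rw [List.take_of_length_le (by simp)]
  rfl

lemma cascadeY_succ {b n : ℕ} {Ω : Type*} (X : List (Fin b) → Ω → ℝ) (v : Fin (n + 1) → Fin b)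
    (ω : Ω) : cascadeY X (List.ofFn v) ω =
      cascadeY X (List.ofFn (Fin.init v)) ω * X (List.ofFn v) ω := by
  unfold cascadeY
  simp only [List.length_ofFn]
  rw [Finset.prod_range_succ]
  congr 1
  · refine Finset.prod_congr rfl fun k hk => ?_
    rw [Finset.mem_range] at hk
    rw [← take_ofFn, List.take_take, min_eq_left (by omega)]
  · rw [List.take_of_length_le (by simp)]

lemma sum_init {b : ℕ} (ν : Measure (SymbSpace b)) [IsProbabilityMeasure ν] (n : ℕ)
    (φ : (Fin n → Fin b) → ℝ) :
    ∑ u, φ u * (ν (cylinder (List.ofFn u))).toReal =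
      ∑ v : Fin (n + 1) → Fin b, φ (Fin.init v) * (ν (cylinder (List.ofFn v))).toReal := by
  rw [← integral_resW, ← integral_resW ν (n + 1) (fun v => φ (Fin.init v))]
  rfl

variable {b : ℕ} {Ω : Type*} [mΩ : MeasurableSpace Ω] {P : Measure Ω}
    [IsProbabilityMeasure P] {X : List (Fin b) → Ω → ℝ} {X₀ : Ω → ℝ}

lemma X₀_int (hM1 : CascadeM1 P X X₀) : Integrable X₀ P := by
  by_contra h
  have := hM1.mean₀
  rw [integral_undef h] at this
  norm_num at this

lemma X_int (hM1 : CascadeM1 P X X₀) (w : List (Fin b)) (hw : w ≠ []) : Integrable (X w) P :=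
  (hM1.ident w hw).integrable_iff.2 (X₀_int hM1)

lemma X_mean (hM1 : CascadeM1 P X X₀) (w : List (Fin b)) (hw : w ≠ []) : ∫ ω, X w ω ∂P = 1 :=
  (hM1.ident w hw).integral_eq.trans hM1.mean₀

lemma ofFn_ne {n : ℕ} (v : Fin (n + 1) → Fin b) : List.ofFn v ≠ [] := by
  intro h; have := congrArg List.length h; simp at this

lemma cascadeY_nonneg (hM1 : CascadeM1 P X X₀) (w : List (Fin b)) (ω : Ω) : 0 ≤ cascadeY X w ω :=
  Finset.prod_nonneg fun _ _ => hM1.nonneg _ _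

lemma indep_step (hM1 : CascadeM1 P X X₀) {n : ℕ} (v : Fin (n + 1) → Fin b) (φ : Ω → ℝ)
    (hφ : Measurable[casSig X (lenLe b n)] φ) : IndepFun φ (X (List.ofFn v)) P := by
  have h := casSig_indep hM1 (len_disj b n)
  have hX : Measurable[casSig X (lenEq b (n + 1))] (X (List.ofFn v)) :=
    casSig_meas ⟨List.ofFn v, ofFn_ne v⟩ (by show (List.ofFn v).length = n + 1; simp)
  rw [IndepFun_iff_Indep]
  exact indep_of_indep_of_le_left (indep_of_indep_of_le_right h
    (measurable_iff_comap_le.1 hX)) (measurable_iff_comap_le.1 hφ)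

lemma cascadeY_int (hM1 : CascadeM1 P X X₀) {n : ℕ} (v : Fin n → Fin b) :
    Integrable (cascadeY X (List.ofFn v)) P := by
  induction n with
  | zero =>
    have : cascadeY X (List.ofFn v) = fun _ => 1 := by ext ω; simp [cascadeY]
    rw [this]; exact integrable_const _
  | succ n ih =>
    have : cascadeY X (List.ofFn v) = cascadeY X (List.ofFn (Fin.init v)) * X (List.ofFn v) := by
      ext ω; exact cascadeY_succ X v ω
    rw [this]
    exact (indep_step hM1 v _ (cascadeY_meas _ (by simp))).integrable_mul (ih _)
      (X_int hM1 _ (ofFn_ne v))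

lemma cascadeZ_int (hM1 : CascadeM1 P X X₀) (ν : Measure (SymbSpace b)) (n : ℕ) :
    Integrable (cascadeZ X ν n) P :=
  integrable_finsetSum _ fun u _ => (cascadeY_int hM1 u).mul_const _

lemma cascadeZ_nonneg (hM1 : CascadeM1 P X X₀) (ν : Measure (SymbSpace b)) (n : ℕ) (ω : Ω) :
    0 ≤ cascadeZ X ν n ω :=
  Finset.sum_nonneg fun _ _ => mul_nonneg (cascadeY_nonneg hM1 _ _) ENNReal.toReal_nonneg

lemma cascadeZ_adapted (hM1 : CascadeM1 P X X₀) (ν : Measure (SymbSpace b)) (n : ℕ) :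
    Measurable[casSig X (lenLe b n)] (cascadeZ X ν n) := by
  refine Finset.measurable_sum _ fun u _ => ?_
  exact (cascadeY_meas _ (by simp)).mul_const _

lemma cascadeZ_mart (hM1 : CascadeM1 P X X₀) (ν : Measure (SymbSpace b)) [IsProbabilityMeasure ν] :
    Martingale (cascadeZ X ν) (casFil X hM1.meas) P := by
  refine martingale_of_setIntegral_eq_succ (fun n => ?_) (cascadeZ_int hM1 ν) ?_
  · exact (cascadeZ_adapted hM1 ν n).stronglyMeasurable
  · intro n A hA
    have hA' : MeasurableSet A := (casFil X hM1.meas).le n _ hA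
    have e1 : cascadeZ X ν n = fun ω => ∑ v : Fin (n + 1) → Fin b,
        cascadeY X (List.ofFn (Fin.init v)) ω * (ν (cylinder (List.ofFn v))).toReal := by
      ext ω
      exact sum_init ν n (fun u => cascadeY X (List.ofFn u) ω)
    rw [e1]
    unfold cascadeZ
    have hi1 : ∀ v : Fin (n + 1) → Fin b, Integrable (fun ω =>
        cascadeY X (List.ofFn (Fin.init v)) ω * (ν (cylinder (List.ofFn v))).toReal)
        (P.restrict A) := fun v => by
      have := cascadeY_int hM1 (Fin.init v : Fin n → Fin b)
      exact (this.mul_const _).integrableOn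
    have hi2 : ∀ v : Fin (n + 1) → Fin b, Integrable (fun ω =>
        cascadeY X (List.ofFn v) ω * (ν (cylinder (List.ofFn v))).toReal)
        (P.restrict A) := fun v => ((cascadeY_int hM1 v).mul_const _).integrableOn
    rw [integral_finsetSum _ fun u _ => hi1 u, integral_finsetSum _ fun u _ => hi2 u]
    refine Finset.sum_congr rfl fun v _ => ?_
    rw [integral_mul_const, integral_mul_const]
    congr 1
    have hφ : Measurable[casSig X (lenLe b n)] (A.indicator (cascadeY X (List.ofFn (Fin.init v)))) :=
      (cascadeY_meas _ (by simp)).indicator hA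
    have hφ' : Measurable (A.indicator (cascadeY X (List.ofFn (Fin.init v)))) :=
      hφ.mono (casSig_le hM1.meas _) le_rfl
    have := (indep_step hM1 v _ hφ).integral_mul_eq_mul_integral hφ'.aestronglyMeasurable
      (hM1.meas _).aestronglyMeasurable
    rw [X_mean hM1 _ (ofFn_ne v), mul_one, integral_indicator hA'] at this
    rw [← this, ← integral_indicator hA']
    refine integral_congr_ae (ae_of_all _ fun ω => ?_)
    by_cases hω : ω ∈ A
    · simp only [Pi.mul_apply, indicator_of_mem hω]; exact (cascadeY_succ X v ω).symm
    · simp [hω]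

lemma cascadeZ_mean (hM1 : CascadeM1 P X X₀) (ν : Measure (SymbSpace b)) [IsProbabilityMeasure ν]
    (n : ℕ) : ∫ ω, cascadeZ X ν n ω ∂P = 1 := by
  have h := (cascadeZ_mart hM1 ν).setIntegral_eq (Nat.zero_le n) MeasurableSet.univ
  simp only [Measure.restrict_univ] at h
  rw [← h]
  have : ∀ ω, cascadeZ X ν 0 ω = 1 := by
    intro ω
    have hc : _root_.cylinder ([] : List (Fin b)) = univ := by
      ext x; simp [_root_.cylinder]
    simp [cascadeZ, cascadeY, hc]
  simp [this]

lemma cascadeZ_doob (hM1 : CascadeM1 P X X₀) (ν : Measure (SymbSpace b)) [IsProbabilityMeasure ν]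
    (n : ℕ) (K : NNReal) : (K : ℝ≥0∞) * P {ω | ∃ k ≤ n, (K : ℝ) ≤ cascadeZ X ν k ω} ≤ 1 := by
  have h := maximal_ineq (cascadeZ_mart hM1 ν).submartingale
    (fun k ω => cascadeZ_nonneg hM1 ν k ω) (ε := K) n
  have hs : {ω | ∃ k ≤ n, (K : ℝ) ≤ cascadeZ X ν k ω} = {ω | (K : ℝ) ≤
    (Finset.range (n + 1)).sup' Finset.nonempty_range_add_one fun k => cascadeZ X ν k ω} := by
    ext ω
    simp only [mem_ofPred_eq, Finset.le_sup'_iff, Finset.mem_range, Nat.lt_succ_iff]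
  rw [hs]
  refine h.trans ?_
  rw [← ENNReal.ofReal_one]
  refine ENNReal.ofReal_le_ofReal ?_
  rw [← cascadeZ_mean hM1 ν n]
  exact setIntegral_le_integral (cascadeZ_int hM1 ν n) (ae_of_all _ fun ω => cascadeZ_nonneg hM1 ν n ω)

lemma cascadeZ_conv (hM1 : CascadeM1 P X X₀) (ν : Measure (SymbSpace b)) [IsProbabilityMeasure ν] :
    ∀ᵐ ω ∂P, ∃ z, Tendsto (fun n => cascadeZ X ν n ω) atTop (nhds z) := by
  have := (cascadeZ_mart hM1 ν).submartingale.exists_ae_tendsto_of_bdd (R := 1) (by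
    intro n
    rw [eLpNorm_one_eq_lintegral_enorm]
    have : ∀ ω, ‖cascadeZ X ν n ω‖ₑ = ENNReal.ofReal (cascadeZ X ν n ω) := fun ω =>
      Real.enorm_of_nonneg (cascadeZ_nonneg hM1 ν n ω)
    simp only [this]
    rw [← ofReal_integral_eq_lintegral_ofReal (cascadeZ_int hM1 ν n)
      (ae_of_all _ fun ω => cascadeZ_nonneg hM1 ν n ω), cascadeZ_mean hM1 ν n]
    simp)
  exact this

/-- Convergence in probability to zero implies a.s. convergence to zero. -/
lemma cascadeZ_zero (hM1 : CascadeM1 P X X₀) (ν : Measure (SymbSpace b)) [IsProbabilityMeasure ν]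
    (h : ∀ ε : ℝ, 0 < ε → Tendsto (fun n => P {ω | ε ≤ cascadeZ X ν n ω}) atTop (nhds 0)) :
    ∀ᵐ ω ∂P, Tendsto (fun n => cascadeZ X ν n ω) atTop (nhds 0) := by
  have hm : TendstoInMeasure P (cascadeZ X ν) atTop (fun _ => (0 : ℝ)) := by
    rw [tendstoInMeasure_iff_norm]
    intro ε hε
    refine (h ε hε).congr fun n => ?_
    congr 1
    ext ω
    simp only [mem_ofPred_eq, sub_zero, Real.norm_eq_abs, abs_of_nonneg (cascadeZ_nonneg hM1 ν n ω)]
  obtain ⟨ns, hns, hae⟩ := hm.exists_seq_tendsto_ae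
  filter_upwards [hae, cascadeZ_conv hM1 ν] with ω h1 ⟨z, hz⟩
  have := tendsto_nhds_unique h1 (hz.comp hns.tendsto_atTop)
  rw [this]; exact hz

end

section

def muX {Ω : Type*} [MeasurableSpace Ω] (P : Measure Ω) (X₀ : Ω → ℝ) : Measure ℝ :=
  (P.withDensity (fun ω => ENNReal.ofReal (X₀ ω))).map (fun ω => Real.log (X₀ ω))

section
variable {b : ℕ} {Ω : Type*} [mΩ : MeasurableSpace Ω] {P : Measure Ω}
    [IsProbabilityMeasure P] {X : List (Fin b) → Ω → ℝ} {X₀ : Ω → ℝ}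

lemma muX_apply (hm : Measurable X₀) {s : Set ℝ} (hs : MeasurableSet s) :
    muX P X₀ s = ∫⁻ ω, s.indicator (fun _ => 1) (Real.log (X₀ ω)) * ENNReal.ofReal (X₀ ω) ∂P := by
  have hl : Measurable (fun ω => Real.log (X₀ ω)) := Real.measurable_log.comp hm
  unfold muX
  rw [Measure.map_apply hl hs, withDensity_apply _ (hl hs), ← lintegral_indicator (hl hs)]
  refine lintegral_congr fun ω => ?_
  by_cases h : Real.log (X₀ ω) ∈ s
  · simp [Set.indicator, h]
  · simp [Set.indicator, h]

lemma muX_prob (hM1 : CascadeM1 P X X₀) : IsProbabilityMeasure (muX P X₀) := by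
  constructor
  rw [muX_apply hM1.meas₀ MeasurableSet.univ]
  simp only [indicator_univ, one_mul]
  rw [← ofReal_integral_eq_lintegral_ofReal (X₀_int hM1) (ae_of_all _ hM1.nonneg₀), hM1.mean₀]
  simp

def logW (X : List (Fin b) → Ω → ℝ) {n : ℕ} (u : Fin n → Fin b) (ω : Ω) : Fin n → ℝ :=
  fun i => Real.log (X ((List.ofFn u).take (i + 1)) ω)

lemma measurable_logW (hM1 : CascadeM1 P X X₀) {n : ℕ} (u : Fin n → Fin b) :
    Measurable (logW X u) :=
  measurable_pi_lambda _ fun _ => Real.measurable_log.comp (hM1.meas _)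

lemma take_ne {n : ℕ} (u : Fin n → Fin b) (i : Fin n) : (List.ofFn u).take (i + 1) ≠ [] := by
  intro h
  have h2 := congrArg List.length h
  have := i.2
  simp only [List.length_take, List.length_ofFn, List.length_nil] at h2
  omega

lemma take_inj {n : ℕ} (u : Fin n → Fin b) :
    Function.Injective (fun i : Fin n => (⟨(List.ofFn u).take (i + 1), take_ne u i⟩ :
      {w : List (Fin b) // w ≠ []})) := by
  intro i j h
  have h1 := congrArg (fun w : {w : List (Fin b) // w ≠ []} => w.1.length) h
  have := i.2
  have := j.2
  simp only [List.length_take, List.length_ofFn] at h1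
  ext; omega

lemma cascadeY_fin {n : ℕ} (u : Fin n → Fin b) (ω : Ω) :
    cascadeY X (List.ofFn u) ω = ∏ i : Fin n, X ((List.ofFn u).take (i + 1)) ω := by
  unfold cascadeY
  rw [List.length_ofFn, Finset.prod_range]

lemma tilt (hM1 : CascadeM1 P X X₀) [IsProbabilityMeasure (muX P X₀)] {n : ℕ} (u : Fin n → Fin b)
    {A : Set (Fin n → ℝ)} (hA : MeasurableSet A) :
    ∫⁻ ω, A.indicator (fun _ => 1) (logW X u ω) * ENNReal.ofReal (cascadeY X (List.ofFn u) ω) ∂P =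
      Measure.pi (fun _ : Fin n => muX P X₀) A := by
  let m := (P.withDensity (fun ω => ENNReal.ofReal (cascadeY X (List.ofFn u) ω))).map (logW X u)
  have hlw := measurable_logW hM1 u
  have hm : ∀ B, MeasurableSet B → m B = ∫⁻ ω, B.indicator (fun _ => 1) (logW X u ω) *
      ENNReal.ofReal (cascadeY X (List.ofFn u) ω) ∂P := by
    intro B hB
    show Measure.map _ _ B = _
    rw [Measure.map_apply hlw hB, withDensity_apply _ (hlw hB), ← lintegral_indicator (hlw hB)]
    refine lintegral_congr fun ω => ?_
    by_cases h : logW X u ω ∈ B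
    · simp [Set.indicator, h]
    · simp [Set.indicator, h]
  rw [← hm A hA]
  congr 1
  symm
  refine Measure.pi_eq fun s hs => ?_
  rw [hm _ (MeasurableSet.univ_pi hs)]
  let g : Fin n → ℝ → ℝ≥0∞ := fun i x => (s i).indicator (fun _ => 1) (Real.log x) * ENNReal.ofReal x
  have hg : ∀ i, Measurable (g i) := fun i =>
    ((measurable_const.indicator (hs i)).comp Real.measurable_log).mul ENNReal.measurable_ofReal
  have hind : iIndepFun (fun (i : Fin n) ω => g i (X ((List.ofFn u).take (i + 1)) ω)) P :=
    (hM1.indep.precomp (take_inj u)).comp g hg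
  have h1 := lintegral_prod_eq_prod_lintegral_of_indepFun Finset.univ _ hind
    (fun i => (hg i).comp (hM1.meas _))
  have h2 : ∀ ω, (Set.pi univ s).indicator (fun _ => 1) (logW X u ω) *
      ENNReal.ofReal (cascadeY X (List.ofFn u) ω) =
      ∏ i : Fin n, g i (X ((List.ofFn u).take (i + 1)) ω) := by
    intro ω
    simp only [g]
    rw [Finset.prod_mul_distrib, cascadeY_fin, ENNReal.ofReal_prod_of_nonneg
      (fun i _ => hM1.nonneg _ _)]
    congr 1
    by_cases h : logW X u ω ∈ Set.pi univ s
    · rw [indicator_of_mem h]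
      symm
      refine Finset.prod_eq_one fun i _ => ?_
      exact indicator_of_mem (h i trivial) _
    · rw [indicator_of_notMem h]
      simp only [Set.mem_pi, mem_univ, true_imp_iff, not_forall] at h
      obtain ⟨i, hi⟩ := h
      symm
      exact Finset.prod_eq_zero (Finset.mem_univ i) (indicator_of_notMem hi _)
  rw [lintegral_congr h2, h1]
  refine Finset.prod_congr rfl fun i _ => ?_
  rw [muX_apply hM1.meas₀ (hs i)]
  exact ((hM1.ident _ (take_ne u i)).comp (hg i)).lintegral_eq

lemma seqM_map (μ : Measure ℝ) [IsProbabilityMeasure μ] (n : ℕ) :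
    (seqM μ).map (fun ξ (i : Fin n) => ξ i) = Measure.pi (fun _ : Fin n => μ) := by
  have h := (iIndepFun_infinitePi (P := fun _ : ℕ => μ) (X := fun _ x => x)
    (fun _ => measurable_id)).precomp (g := fun i : Fin n => (i : ℕ)) Fin.val_injective
  rw [iIndepFun_iff_map_fun_eq_pi_map] at h
  · refine h.trans ?_
    congr 1
    ext1 i
    exact Measure.infinitePi_map_eval (fun _ : ℕ => μ) i
  · intro i
    exact (measurable_pi_apply (i : ℕ)).aemeasurable

/-- good paths up to level `n` along the word `u`. -/
def goodA (ν : Measure (SymbSpace b)) (K : ℝ) {n : ℕ} (u : Fin n → Fin b) : Set (Fin n → ℝ) :=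
  {a | ∀ k ≤ n, 1 ≤ k → Real.exp (∑ i ∈ Finset.range k, if h : i < n then a ⟨i, h⟩ else 0) *
    (ν (cylinder ((List.ofFn u).take k))).toReal < K}

lemma goodA_meas (ν : Measure (SymbSpace b)) (K : ℝ) {n : ℕ} (u : Fin n → Fin b) :
    MeasurableSet (goodA ν K u) := by
  have : goodA ν K u = ⋂ k : ℕ, ⋂ (_ : k ≤ n), ⋂ (_ : 1 ≤ k),
      {a | Real.exp (∑ i ∈ Finset.range k, if h : i < n then a ⟨i, h⟩ else 0) *
    (ν (cylinder ((List.ofFn u).take k))).toReal < K} := by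
    ext a; simp [goodA]
  rw [this]
  refine MeasurableSet.iInter fun k => MeasurableSet.iInter fun _ => MeasurableSet.iInter fun _ => ?_
  refine measurableSet_lt (Measurable.mul_const (Real.measurable_exp.comp ?_) _) measurable_const
  refine Finset.measurable_sum _ fun i _ => ?_
  by_cases h : i < n
  · simp only [h, dif_pos]; exact measurable_pi_apply _
  · simp only [h]; exact measurable_const

def goodG (ν : Measure (SymbSpace b)) (K : ℝ) (n : ℕ) : Set (SymbSpace b × (ℕ → ℝ)) :=
  {y | ∀ k ≤ n, 1 ≤ k → Real.exp (∑ i ∈ Finset.range k, y.2 i) *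
    (ν (cylinder (wordPrefix y.1 k))).toReal < K}

lemma goodG_meas (ν : Measure (SymbSpace b)) [IsProbabilityMeasure ν] (K : ℝ) (n : ℕ) :
    MeasurableSet (goodG ν K n) := by
  have : goodG ν K n = ⋂ k : ℕ, ⋂ (_ : k ≤ n), ⋂ (_ : 1 ≤ k),
      {y | Real.exp (∑ i ∈ Finset.range k, y.2 i) *
    (ν (cylinder (wordPrefix y.1 k))).toReal < K} := by
    ext a; simp [goodG]
  rw [this]
  refine MeasurableSet.iInter fun k => MeasurableSet.iInter fun _ => MeasurableSet.iInter fun _ => ?_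
  refine measurableSet_lt (Measurable.mul (Real.measurable_exp.comp ?_) ?_) measurable_const
  · exact Finset.measurable_sum _ fun i _ => (measurable_pi_apply i).comp measurable_snd
  · exact (measurable_of_finite (fun u : Fin k → Fin b => (ν (cylinder (List.ofFn u))).toReal)).comp
      ((measurable_resW k).comp measurable_fst)

lemma take_resW (x : SymbSpace b) {k n : ℕ} (h : k ≤ n) :
    (List.ofFn (resW n x)).take k = wordPrefix x k := by
  refine List.ext_getElem ?_ ?_
  · simp [wordPrefix, h]
  · intro i h1 h2
    simp [wordPrefix, resW]

lemma take_ofFn' {k n : ℕ} (u : Fin n → Fin b) (h : k ≤ n) :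
    (List.ofFn u).take k = List.ofFn (fun i : Fin k => u (Fin.castLE h i)) := by
  refine List.ext_getElem ?_ ?_
  · simp [h]
  · intro i h1 h2
    simp

lemma goodG_eq (ν : Measure (SymbSpace b)) [IsProbabilityMeasure ν] (K : ℝ) (n : ℕ)
    (μ : Measure ℝ) [IsProbabilityMeasure μ] :
    (ν.prod (seqM μ)) (goodG ν K n) =
      ∑ u : Fin n → Fin b, Measure.pi (fun _ : Fin n => μ) (goodA ν K u) *
        ν (cylinder (List.ofFn u)) := by
  rw [Measure.prod_apply (goodG_meas ν K n), ← lintegral_resW]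
  refine lintegral_congr fun x => ?_
  have hm : Measurable (fun (ξ : ℕ → ℝ) (i : Fin n) => ξ i) :=
    measurable_pi_lambda _ fun i => measurable_pi_apply (i : ℕ)
  rw [← seqM_map, Measure.map_apply hm (goodA_meas ν K _)]
  congr 1
  ext ξ
  simp only [goodG, goodA, mem_preimage, mem_ofPred_eq]
  refine forall_congr' fun k => forall_congr' fun hk => forall_congr' fun _ => ?_
  rw [take_resW x hk]
  have : ∑ i ∈ Finset.range k, ξ i = ∑ i ∈ Finset.range k, if h : i < n then ξ i else 0 := by
    refine Finset.sum_congr rfl fun i hi => ?_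
    rw [Finset.mem_range] at hi
    rw [dif_pos (by omega)]
  rw [this]

lemma Z_ge (hM1 : CascadeM1 P X X₀) (ν : Measure (SymbSpace b)) {n : ℕ} (u : Fin n → Fin b) (ω : Ω) :
    cascadeY X (List.ofFn u) ω * (ν (cylinder (List.ofFn u))).toReal ≤ cascadeZ X ν n ω :=
  Finset.single_le_sum (f := fun u : Fin n → Fin b =>
    cascadeY X (List.ofFn u) ω * (ν (cylinder (List.ofFn u))).toReal)
    (fun _ _ => mul_nonneg (cascadeY_nonneg hM1 _ _) ENNReal.toReal_nonneg) (Finset.mem_univ u)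

lemma good_of_lt (hM1 : CascadeM1 P X X₀) (ν : Measure (SymbSpace b)) {K : ℝ} {n : ℕ}
    (u : Fin n → Fin b) (ω : Ω) (hY : cascadeY X (List.ofFn u) ω ≠ 0)
    (hZ : ∀ k ≤ n, cascadeZ X ν k ω < K) : logW X u ω ∈ goodA ν K u := by
  intro k hk _
  have hpos : ∀ i : Fin n, 0 < X ((List.ofFn u).take (i + 1)) ω := by
    intro i
    rw [cascadeY_fin, Finset.prod_ne_zero_iff] at hY
    exact lt_of_le_of_ne (hM1.nonneg _ _) (hY i (Finset.mem_univ i)).symm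
  refine lt_of_eq_of_lt ?_ (lt_of_le_of_lt (Z_ge hM1 ν (fun i : Fin k => u (Fin.castLE hk i)) ω)
    (hZ k hk))
  rw [← take_ofFn' u hk]
  congr 1
  rw [Real.exp_sum]
  unfold cascadeY
  rw [List.length_take, List.length_ofFn, min_eq_left hk]
  refine Finset.prod_congr rfl fun i hi => ?_
  rw [Finset.mem_range] at hi
  have hin : i < n := by omega
  rw [dif_pos hin, List.take_take, min_eq_left (by omega)]
  exact Real.exp_log (hpos ⟨i, hin⟩)

lemma tail_bound (hM1 : CascadeM1 P X X₀) [IsProbabilityMeasure (muX P X₀)]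
    (ν : Measure (SymbSpace b)) [IsProbabilityMeasure ν]
    (K : NNReal) (hK : K ≠ 0) (n : ℕ) (ε : ℝ) (hε : 0 < ε) :
    P {ω | ε ≤ cascadeZ X ν n ω} ≤ (K : ℝ≥0∞)⁻¹ +
      (ν.prod (seqM (muX P X₀))) (goodG ν K n) / ENNReal.ofReal ε := by
  let R : Ω → ℝ≥0∞ := fun ω => ∑ u : Fin n → Fin b, ((goodA ν K u).indicator (fun _ => 1)
    (logW X u ω) * ENNReal.ofReal (cascadeY X (List.ofFn u) ω)) * ν (cylinder (List.ofFn u))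
  have hRm : ∀ u : Fin n → Fin b, Measurable (fun ω => (goodA ν K u).indicator (fun _ => 1)
    (logW X u ω) * ENNReal.ofReal (cascadeY X (List.ofFn u) ω)) := fun u =>
    ((measurable_const.indicator (goodA_meas ν K u)).comp (measurable_logW hM1 u)).mul
      (ENNReal.measurable_ofReal.comp ((cascadeY_meas (n := n) _ (by simp)).mono
        (casSig_le hM1.meas _) le_rfl))
  have hR : ∫⁻ ω, R ω ∂P = (ν.prod (seqM (muX P X₀))) (goodG ν K n) := by
    rw [goodG_eq, lintegral_finsetSum _ fun u _ => (hRm u).mul_const _]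
    refine Finset.sum_congr rfl fun u _ => ?_
    rw [lintegral_mul_const _ (hRm u), tilt hM1 u (goodA_meas ν K u)]
  have hsub : {ω | ε ≤ cascadeZ X ν n ω} ⊆ {ω | ∃ k ≤ n, (K : ℝ) ≤ cascadeZ X ν k ω} ∪
      {ω | ENNReal.ofReal ε ≤ R ω} := by
    intro ω hω
    by_cases hD : ∃ k ≤ n, (K : ℝ) ≤ cascadeZ X ν k ω
    · exact Or.inl hD
    · right
      push Not at hD
      refine (ENNReal.ofReal_le_ofReal hω).trans (le_of_eq ?_)
      unfold cascadeZ
      rw [ENNReal.ofReal_sum_of_nonneg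
        (fun _ _ => mul_nonneg (cascadeY_nonneg hM1 _ _) ENNReal.toReal_nonneg)]
      refine Finset.sum_congr rfl fun u _ => ?_
      rw [ENNReal.ofReal_mul (cascadeY_nonneg hM1 _ _), ENNReal.ofReal_toReal (measure_ne_top _ _)]
      congr 1
      by_cases hY : cascadeY X (List.ofFn u) ω = 0
      · simp [hY]
      · rw [indicator_of_mem (good_of_lt hM1 ν u ω hY hD), one_mul]
  refine (measure_mono hsub).trans ((measure_union_le _ _).trans (add_le_add ?_ ?_))
  · have := cascadeZ_doob hM1 ν n K
    rw [ENNReal.le_inv_iff_mul_le, mul_comm]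
    exact this
  · rw [← hR]
    refine meas_ge_le_lintegral_div ?_ (by simpa using hε) ENNReal.ofReal_ne_top
    exact (Finset.measurable_sum _ fun u _ => (hRm u).mul_const _).aemeasurable

lemma lemA (hM1 : CascadeM1 P X X₀) [IsProbabilityMeasure (muX P X₀)]
    (ν : Measure (SymbSpace b)) [IsProbabilityMeasure ν]
    (hpath : ∀ᵐ y ∂(ν.prod (seqM (muX P X₀))), ∀ K : ℝ, ∃ n, 1 ≤ n ∧
      K ≤ Real.exp (∑ k ∈ Finset.range n, y.2 k) * (ν (cylinder (wordPrefix y.1 n))).toReal) :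
    ∀ᵐ ω ∂P, Tendsto (fun n => cascadeZ X ν n ω) atTop (nhds 0) := by
  refine cascadeZ_zero hM1 ν fun ε hε => ?_
  have hlim : ∀ K : ℝ, Tendsto (fun n => (ν.prod (seqM (muX P X₀))) (goodG ν K n)) atTop (nhds 0) := by
    intro K
    have h0 : (ν.prod (seqM (muX P X₀))) (⋂ n, goodG ν K n) = 0 := by
      refine measure_mono_null ?_ (ae_iff.1 hpath)
      intro y hy h
      obtain ⟨n, hn, h'⟩ := h K
      exact absurd (mem_iInter.1 hy n n le_rfl hn) (not_lt.2 h')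
    rw [← h0]
    refine tendsto_measure_iInter_atTop (fun n => (goodG_meas ν K n).nullMeasurableSet) ?_
      ⟨0, measure_ne_top _ _⟩
    intro n m hnm y hy k hk
    exact hy k (hk.trans hnm)
  rw [ENNReal.tendsto_nhds_zero]
  intro δ hδ
  obtain ⟨K, hK, hKδ⟩ : ∃ K : NNReal, K ≠ 0 ∧ (K : ℝ≥0∞)⁻¹ ≤ δ / 2 := by
    obtain ⟨m, hm⟩ := ENNReal.exists_inv_nat_lt (a := δ / 2) (by simpa using hδ.ne')
    refine ⟨m + 1, by positivity, le_trans ?_ hm.le⟩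
    rw [ENNReal.inv_le_inv]
    push_cast
    exact le_self_add
  have h2 : Tendsto (fun n => (ν.prod (seqM (muX P X₀))) (goodG ν K n) / ENNReal.ofReal ε)
      atTop (nhds 0) := by
    have := ENNReal.Tendsto.div_const (hlim K) (b := ENNReal.ofReal ε)
      (Or.inr (by simpa using hε))
    simpa using this
  have h3 := (ENNReal.tendsto_nhds_zero.1 h2) (δ / 2) (by simpa using hδ.ne')
  filter_upwards [h3] with n hn
  refine (tail_bound hM1 ν K hK n ε hε).trans ((add_le_add hKδ hn).trans ?_)
  rw [ENNReal.add_halves]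
end
end

section
section
variable {b : ℕ} {Ω : Type*} [mΩ : MeasurableSpace Ω] {P : Measure Ω}
    [IsProbabilityMeasure P] {X : List (Fin b) → Ω → ℝ} {X₀ : Ω → ℝ}

lemma xlogx_ge {x : ℝ} (hx : 0 ≤ x) : x - 1 ≤ x * Real.log x := by
  rcases hx.eq_or_lt with rfl | h
  · simp
  · have h1 := Real.one_sub_inv_le_log_of_pos h
    have h2 := mul_le_mul_of_nonneg_left h1 hx
    rw [mul_sub, mul_one, mul_inv_cancel₀ h.ne'] at h2
    exact h2

lemma xlogx_int (hM1 : CascadeM1 P X X₀) {h : ℝ} (hh : 0 ≤ h)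
    (hcrit : entropyX P X₀ = ENNReal.ofReal h) :
    Integrable (fun ω => X₀ ω * Real.log (X₀ ω)) P ∧ ∫ ω, X₀ ω * Real.log (X₀ ω) ∂P = h := by
  have hm : Measurable (fun ω => X₀ ω * Real.log (X₀ ω)) :=
    hM1.meas₀.mul (Real.measurable_log.comp hM1.meas₀)
  have hneg : ∫⁻ ω, ENNReal.ofReal (-(X₀ ω * Real.log (X₀ ω))) ∂P ≤ 1 := by
    calc _ ≤ ∫⁻ _, 1 ∂P := by
          refine lintegral_mono fun ω => ?_
          rw [ENNReal.ofReal_le_one]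
          have := xlogx_ge (hM1.nonneg₀ ω)
          have := hM1.nonneg₀ ω
          linarith
      _ = 1 := by simp
  have hneg' : ∫⁻ ω, ENNReal.ofReal (-(X₀ ω * Real.log (X₀ ω))) ∂P ≠ ⊤ :=
    (hneg.trans_lt ENNReal.one_lt_top).ne
  have hpos : ∫⁻ ω, ENNReal.ofReal (X₀ ω * Real.log (X₀ ω)) ∂P ≠ ⊤ := by
    intro ht
    unfold entropyX at hcrit
    rw [ht, ENNReal.top_sub hneg'] at hcrit
    exact ENNReal.ofReal_ne_top hcrit.symm
  have hInt : Integrable (fun ω => X₀ ω * Real.log (X₀ ω)) P := by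
    refine ⟨hm.aestronglyMeasurable, ?_⟩
    rw [hasFiniteIntegral_iff_enorm]
    have : ∀ ω, ‖X₀ ω * Real.log (X₀ ω)‖ₑ ≤ ENNReal.ofReal (X₀ ω * Real.log (X₀ ω)) +
        ENNReal.ofReal (-(X₀ ω * Real.log (X₀ ω))) := by
      intro ω
      rw [Real.enorm_eq_ofReal_abs]
      rcases abs_cases (X₀ ω * Real.log (X₀ ω)) with h | h
      · rw [h.1]; exact le_self_add
      · rw [h.1]; exact le_add_self
    refine (lintegral_mono this).trans_lt ?_
    rw [lintegral_add_left hm.ennreal_ofReal]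
    exact ENNReal.add_lt_top.2 ⟨hpos.lt_top, hneg'.lt_top⟩
  refine ⟨hInt, ?_⟩
  have h0 : 0 ≤ ∫ ω, X₀ ω * Real.log (X₀ ω) ∂P := by
    have h1 : ∫ ω, (X₀ ω - 1) ∂P ≤ ∫ ω, X₀ ω * Real.log (X₀ ω) ∂P :=
      integral_mono ((X₀_int hM1).sub (integrable_const _)) hInt
        (fun ω => xlogx_ge (hM1.nonneg₀ ω))
    rw [integral_sub (X₀_int hM1) (integrable_const _), hM1.mean₀] at h1
    simpa using h1
  have heq := integral_eq_lintegral_pos_part_sub_lintegral_neg_part hInt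
  rw [heq] at h0 ⊢
  have hle : ∫⁻ ω, ENNReal.ofReal (-(X₀ ω * Real.log (X₀ ω))) ∂P ≤
      ∫⁻ ω, ENNReal.ofReal (X₀ ω * Real.log (X₀ ω)) ∂P :=
    (ENNReal.toReal_le_toReal hneg' hpos).1 (by linarith)
  rw [← ENNReal.toReal_sub_of_le hle hpos]
  unfold entropyX at hcrit
  rw [hcrit, ENNReal.toReal_ofReal hh]

lemma muX_int (hM1 : CascadeM1 P X X₀) {h : ℝ} (hh : 0 ≤ h)
    (hcrit : entropyX P X₀ = ENNReal.ofReal h) :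
    Integrable (fun a => a) (muX P X₀) ∧ ∫ a, a ∂(muX P X₀) = h := by
  have hl : Measurable (fun ω => Real.log (X₀ ω)) := Real.measurable_log.comp hM1.meas₀
  have hd : Measurable (fun ω => ENNReal.ofReal (X₀ ω)) := ENNReal.measurable_ofReal.comp hM1.meas₀
  obtain ⟨h1, h2⟩ := xlogx_int hM1 hh hcrit
  unfold muX
  constructor
  · rw [integrable_map_measure (g := fun a => a) measurable_id.aestronglyMeasurable hl.aemeasurable]
    rw [integrable_withDensity_iff_integrable_smul' hd (ae_of_all _ fun _ => ENNReal.ofReal_lt_top)]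
    refine h1.congr (ae_of_all _ fun ω => ?_)
    simp [ENNReal.toReal_ofReal (hM1.nonneg₀ ω)]
  · rw [integral_map (f := fun a => a) hl.aemeasurable measurable_id.aestronglyMeasurable,
      integral_withDensity_eq_integral_toReal_smul hd (ae_of_all _ fun _ => ENNReal.ofReal_lt_top)]
    rw [← h2]
    refine integral_congr_ae (ae_of_all _ fun ω => ?_)
    simp [ENNReal.toReal_ofReal (hM1.nonneg₀ ω)]

lemma muX_exp (hM1 : CascadeM1 P X X₀) : Integrable (fun a => Real.exp (-a)) (muX P X₀) := by
  have hl : Measurable (fun ω => Real.log (X₀ ω)) := Real.measurable_log.comp hM1.meas₀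
  have hd : Measurable (fun ω => ENNReal.ofReal (X₀ ω)) := ENNReal.measurable_ofReal.comp hM1.meas₀
  have he : Measurable (fun a : ℝ => Real.exp (-a)) := Real.measurable_exp.comp measurable_neg
  unfold muX
  rw [integrable_map_measure he.aestronglyMeasurable hl.aemeasurable]
  rw [integrable_withDensity_iff_integrable_smul' hd (ae_of_all _ fun _ => ENNReal.ofReal_lt_top)]
  refine Integrable.mono' (integrable_const (1 : ℝ)) ?_ (ae_of_all _ fun ω => ?_)
  · exact (hd.ennreal_toReal.smul (he.comp hl)).aestronglyMeasurable
  · have h0 := hM1.nonneg₀ ω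
    simp only [ENNReal.toReal_ofReal h0, Function.comp, smul_eq_mul]
    rcases h0.eq_or_lt with h | h
    · simp [← h]
    · rw [Real.exp_neg, Real.exp_log h, mul_inv_cancel₀ h.ne']; simp

lemma degen_vals (hM1 : CascadeM1 P X X₀) {c : ℝ} (hc : ∀ᵐ a ∂(muX P X₀), a = c) :
    ∀ᵐ ω ∂P, X₀ ω = 0 ∨ X₀ ω = Real.exp c := by
  have hl : Measurable (fun ω => Real.log (X₀ ω)) := Real.measurable_log.comp hM1.meas₀
  have hd : Measurable (fun ω => ENNReal.ofReal (X₀ ω)) := ENNReal.measurable_ofReal.comp hM1.meas₀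
  unfold muX at hc
  have h1 := ae_of_ae_map hl.aemeasurable hc
  rw [ae_withDensity_iff hd] at h1
  filter_upwards [h1] with ω h
  rcases (hM1.nonneg₀ ω).eq_or_lt with h0 | h0
  · exact Or.inl h0.symm
  · right
    rw [← h (by simpa using h0), Real.exp_log h0]

lemma degen_Q (hM1 : CascadeM1 P X X₀) {c : ℝ} (hc : ∀ᵐ a ∂(muX P X₀), a = c) :
    IsQalphaCascade P X₀ c := by
  have hv := degen_vals hM1 hc
  have hms : MeasurableSet {ω | X₀ ω = Real.exp c} := hM1.meas₀ (measurableSet_singleton _)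
  have h1 : P {ω | X₀ ω = Real.exp c} = ENNReal.ofReal (Real.exp (-c)) := by
    have e1 : X₀ =ᵐ[P] {ω | X₀ ω = Real.exp c}.indicator (fun _ => Real.exp c) := by
      filter_upwards [hv] with ω h
      by_cases h' : X₀ ω = Real.exp c
      · rw [indicator_of_mem (by exact h'), h']
      · rw [indicator_of_notMem (by exact h')]; tauto
    have e2 := hM1.mean₀
    rw [integral_congr_ae e1, integral_indicator_const _ hms, smul_eq_mul] at e2
    have e3 : P.real {ω | X₀ ω = Real.exp c} = Real.exp (-c) := by
      rw [Real.exp_neg]; exact eq_inv_of_mul_eq_one_left e2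
    rw [← e3, ofReal_measureReal]
  refine ⟨h1, ?_⟩
  rw [← h1]
  rw [← prob_compl_eq_one_sub hms]
  refine measure_congr ?_
  filter_upwards [hv] with ω h
  refine propext (?_ : X₀ ω = 0 ↔ ¬ (X₀ ω = Real.exp c))
  constructor
  · intro h0 h1
    rw [h0] at h1
    exact (Real.exp_pos c).ne h1
  · tauto

lemma degen_BE (ν : Measure (SymbSpace b)) [IsProbabilityMeasure ν] (f : SymbSpace b → ℝ)
    (μ : Measure ℝ) [IsProbabilityMeasure μ] {c : ℝ} (hc : ∀ᵐ a ∂μ, a = c)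
    (h : ∀ᵐ x ∂ν, ∀ M : ℝ, ∃ᶠ n in atTop,
      M ≤ ∑ k ∈ Finset.range n, (f ((shiftMap b)^[k] x) + c)) :
    ∀ᵐ y ∂(ν.prod (seqM μ)), y ∉ BE f := by
  have h1 : ∀ᵐ ξ ∂(seqM μ), ∀ k, ξ k = c := by
    rw [ae_all_iff]
    intro k
    exact (measurePreserving_eval_infinitePi (fun _ : ℕ => μ) k).quasiMeasurePreserving.ae hc
  have h2 := (measurePreserving_snd (μ := ν) (ν := seqM μ)).quasiMeasurePreserving.ae h1
  have h3 := (measurePreserving_fst (μ := ν) (ν := seqM μ)).quasiMeasurePreserving.ae h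
  filter_upwards [h2, h3] with y hy2 hy3 hBE
  obtain ⟨K, hK⟩ := hBE
  obtain ⟨n, hn⟩ := (hy3 (K + 1)).exists
  have := hK n
  unfold SG at this
  have e : ∑ k ∈ Finset.range n, (y.2 k + f ((shiftMap b)^[k] y.1)) =
      ∑ k ∈ Finset.range n, (f ((shiftMap b)^[k] y.1) + c) :=
    Finset.sum_congr rfl fun k _ => by rw [hy2 k, add_comm]
  rw [e] at this
  linarith

lemma entropy_nonneg (ν : Measure (SymbSpace b)) [IsProbabilityMeasure ν] {h : ℝ}
    (hent : Tendsto (entropySeq ν) atTop (nhds h)) : 0 ≤ h := by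
  refine ge_of_tendsto' hent fun n => ?_
  unfold entropySeq
  refine mul_nonneg (by positivity) (Finset.sum_nonneg fun u _ => ?_)
  have := Real.mul_log_nonpos (x := (ν (cylinder (List.ofFn u))).toReal) ENNReal.toReal_nonneg
    (by simpa using ENNReal.toReal_mono ENNReal.one_ne_top (prob_le_one (μ := ν)))
  linarith

lemma entropy_unif (ν : Measure (SymbSpace b)) (hb : 2 ≤ b) (hu : IsUniformMeasure ν) {h : ℝ}
    (hent : Tendsto (entropySeq ν) atTop (nhds h)) : h = Real.log b := by
  refine tendsto_nhds_unique hent ?_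
  refine tendsto_const_nhds.congr' ?_
  filter_upwards [eventually_ge_atTop 1] with n hn
  unfold entropySeq
  have hn0 : (n : ℝ) ≠ 0 := by positivity
  have hb0 : (b : ℝ) ≠ 0 := by positivity
  have : ∀ u : Fin n → Fin b, (ν (cylinder (List.ofFn u))).toReal = ((b : ℝ) ^ n)⁻¹ := by
    intro u
    rw [hu]; simp
  simp only [this, Finset.sum_const, Finset.card_univ, Fintype.card_fun, Fintype.card_fin,
    nsmul_eq_mul, Real.log_inv, Real.log_pow]
  push_cast
  field_simp
end
end

section
section
variable {b : ℕ} {Ω : Type*} [mΩ : MeasurableSpace Ω] {P : Measure Ω}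
    [IsProbabilityMeasure P] {X : List (Fin b) → Ω → ℝ} {X₀ : Ω → ℝ}

open Classical in
/-- the surviving words of length `n`. -/
def surv (X : List (Fin b) → Ω → ℝ) (n : ℕ) (ω : Ω) : Finset (Fin n → Fin b) :=
  Finset.univ.filter fun u => cascadeY X (List.ofFn u) ω ≠ 0

lemma mem_surv {n : ℕ} {ω : Ω} {u : Fin n → Fin b} :
    u ∈ surv X n ω ↔ cascadeY X (List.ofFn u) ω ≠ 0 := by simp [surv]

lemma surv_meas {n : ℕ} (S : Finset (Fin n → Fin b)) :
    MeasurableSet[casSig X (lenLe b n)] {ω | surv X n ω = S} := by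
  have : {ω | surv X n ω = S} = ⋂ u : Fin n → Fin b, {ω | cascadeY X (List.ofFn u) ω ≠ 0 ↔ u ∈ S} := by
    ext ω
    simp only [mem_ofPred_eq, mem_iInter, Finset.ext_iff, mem_surv]
  rw [this]
  refine MeasurableSet.iInter fun u => ?_
  have hm : MeasurableSet[casSig X (lenLe b n)] {ω | cascadeY X (List.ofFn u) ω = 0} :=
    cascadeY_meas (X := X) (n := n) (List.ofFn u) (by simp) (measurableSet_singleton 0)
  by_cases h : u ∈ S
  · have e : {ω | cascadeY X (List.ofFn u) ω ≠ 0 ↔ u ∈ S} =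
        {ω | cascadeY X (List.ofFn u) ω = 0}ᶜ := by
      ext ω; simp [h]
    rw [e]; exact hm.compl
  · have e : {ω | cascadeY X (List.ofFn u) ω ≠ 0 ↔ u ∈ S} =
        {ω | cascadeY X (List.ofFn u) ω = 0} := by
      ext ω; simp [h]
    rw [e]; exact hm

lemma surv_succ {n : ℕ} {ω : Ω} (h : surv X n ω = ∅) : surv X (n + 1) ω = ∅ := by
  rw [Finset.eq_empty_iff_forall_notMem] at h ⊢
  intro v hv
  rw [mem_surv, cascadeY_succ] at hv
  exact h (Fin.init v) (mem_surv.2 (left_ne_zero_of_mul hv))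

lemma surv_mono {n m : ℕ} (hnm : n ≤ m) {ω : Ω} (h : surv X n ω = ∅) : surv X m ω = ∅ := by
  induction m, hnm using Nat.le_induction with
  | base => exact h
  | succ m _ ih => exact surv_succ ih

open Classical in
lemma kids_card {n : ℕ} (S : Finset (Fin n → Fin b)) :
    (Finset.univ.filter fun v : Fin (n + 1) → Fin b => (Fin.init v : Fin n → Fin b) ∈ S).card ≤
      S.card * b := by
  have : (S ×ˢ (Finset.univ : Finset (Fin b))).card = S.card * b := by
    rw [Finset.card_product]; simp
  rw [← this]
  refine Finset.card_le_card_of_injOn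
    (fun v : Fin (n + 1) → Fin b => ((Fin.init v : Fin n → Fin b), v (Fin.last n))) ?_ ?_
  · intro v hv
    simpa using hv
  · intro v _ w _ h
    simp only [Prod.mk.injEq] at h
    rw [← Fin.snoc_init_self v, ← Fin.snoc_init_self w, h.1, h.2]

open Classical in
lemma kill_prob (hM1 : CascadeM1 P X X₀) {n : ℕ} (S : Finset (Fin n → Fin b)) {q : ℝ≥0∞}
    (hq : P {ω | X₀ ω = 0} = q) :
    P ({ω | surv X n ω = S} ∩ {ω | ∀ v : Fin (n + 1) → Fin b,
      (Fin.init v : Fin n → Fin b) ∈ S → X (List.ofFn v) ω = 0}) ≥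
      P {ω | surv X n ω = S} * q ^ (S.card * b) := by
  let T := Finset.univ.filter fun v : Fin (n + 1) → Fin b => (Fin.init v : Fin n → Fin b) ∈ S
  have hset : {ω | ∀ v : Fin (n + 1) → Fin b,
      (Fin.init v : Fin n → Fin b) ∈ S → X (List.ofFn v) ω = 0} =
      ⋂ v ∈ T, X (List.ofFn v) ⁻¹' {0} := by
    ext ω; simp [T]
  have hB : MeasurableSet[casSig X (lenEq b (n + 1))] (⋂ v ∈ T, X (List.ofFn v) ⁻¹' {0}) := by
    refine Finset.measurableSet_biInter _ fun v _ => ?_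
    have hX : Measurable[casSig X (lenEq b (n + 1))] (X (List.ofFn v)) :=
      casSig_meas ⟨List.ofFn v, ofFn_ne v⟩ (by show (List.ofFn v).length = n + 1; simp)
    exact hX (measurableSet_singleton 0)
  have hind := (Indep_iff _ _ _).1 (casSig_indep hM1 (len_disj b n)) _ _ (surv_meas (X := X) S) hB
  rw [hset, hind]
  have hinj : Function.Injective (fun v : Fin (n + 1) → Fin b => (⟨List.ofFn v, ofFn_ne v⟩ :
      {w : List (Fin b) // w ≠ []})) := by
    intro v w h
    exact List.ofFn_injective (congrArg Subtype.val h)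
  have hprod := (hM1.indep.precomp hinj).measure_inter_preimage_eq_mul T (sets := fun _ => {0})
    (fun _ _ => measurableSet_singleton 0)
  have h0 : ∀ v : Fin (n + 1) → Fin b, P (X (List.ofFn v) ⁻¹' {0}) = q := by
    intro v
    rw [(hM1.ident _ (ofFn_ne v)).measure_mem_eq (measurableSet_singleton 0)]
    exact hq
  have hB2 : P (⋂ v ∈ T, X (List.ofFn v) ⁻¹' {0}) = q ^ T.card := by
    refine Eq.trans hprod ?_
    refine (Finset.prod_congr rfl fun v _ => h0 v).trans ?_
    simp
  rw [hB2]
  refine mul_le_mul_right (pow_le_pow_right_of_le_one' ?_ (kids_card S)) _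
  rw [← hq]; exact prob_le_one

lemma die_bound (hM1 : CascadeM1 P X X₀) (n K : ℕ) {q : ℝ≥0∞} (hq : P {ω | X₀ ω = 0} = q) :
    P {ω | surv X n ω ≠ ∅ ∧ (surv X n ω).card ≤ K} * q ^ (K * b) ≤
      P {ω | surv X n ω ≠ ∅ ∧ surv X (n + 1) ω = ∅} := by
  classical
  let 𝒮 : Finset (Finset (Fin n → Fin b)) := Finset.univ.filter fun S => S ≠ ∅ ∧ S.card ≤ K
  let A : Finset (Fin n → Fin b) → Set Ω := fun S => {ω | surv X n ω = S}
  let B : Finset (Fin n → Fin b) → Set Ω := fun S => {ω | ∀ v : Fin (n + 1) → Fin b,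
      (Fin.init v : Fin n → Fin b) ∈ S → X (List.ofFn v) ω = 0}
  have hq1 : q ≤ 1 := by rw [← hq]; exact prob_le_one
  have h1 : {ω | surv X n ω ≠ ∅ ∧ (surv X n ω).card ≤ K} ⊆ ⋃ S ∈ 𝒮, A S := by
    intro ω hω
    simp only [mem_iUnion]
    exact ⟨surv X n ω, by simpa [𝒮] using hω, rfl⟩
  have hmA : ∀ S, MeasurableSet (A S) := fun S => casSig_le hM1.meas _ _ (surv_meas S)
  have hmB : ∀ S, MeasurableSet (B S) := by
    intro S
    have : B S = ⋂ v : Fin (n + 1) → Fin b, ⋂ (_ : (Fin.init v : Fin n → Fin b) ∈ S),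
        X (List.ofFn v) ⁻¹' {0} := by
      ext ω; simp [B]
    rw [this]
    exact MeasurableSet.iInter fun v => MeasurableSet.iInter fun _ =>
      hM1.meas _ (measurableSet_singleton 0)
  have h2 : (⋃ S ∈ 𝒮, A S ∩ B S) ⊆ {ω | surv X n ω ≠ ∅ ∧ surv X (n + 1) ω = ∅} := by
    intro ω hω
    simp only [mem_iUnion] at hω
    obtain ⟨S, hS, hA, hB⟩ := hω
    have hA' : surv X n ω = S := hA
    have hS' : S ≠ ∅ ∧ S.card ≤ K := by simpa [𝒮] using hS
    refine ⟨by rw [hA']; exact hS'.1, ?_⟩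
    rw [Finset.eq_empty_iff_forall_notMem]
    intro v hv
    rw [mem_surv, cascadeY_succ] at hv
    refine right_ne_zero_of_mul hv (hB v ?_)
    rw [← hA', mem_surv]
    exact left_ne_zero_of_mul hv
  calc P {ω | surv X n ω ≠ ∅ ∧ (surv X n ω).card ≤ K} * q ^ (K * b)
      ≤ (∑ S ∈ 𝒮, P (A S)) * q ^ (K * b) := by
        gcongr
        exact (measure_mono h1).trans (measure_biUnion_finset_le _ _)
    _ = ∑ S ∈ 𝒮, P (A S) * q ^ (K * b) := Finset.sum_mul _ _ _
    _ ≤ ∑ S ∈ 𝒮, P (A S ∩ B S) := by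
        refine Finset.sum_le_sum fun S hS => ?_
        have hS' : S ≠ ∅ ∧ S.card ≤ K := by simpa [𝒮] using hS
        refine le_trans ?_ (kill_prob hM1 S hq)
        refine mul_le_mul_right (pow_le_pow_right_of_le_one' hq1 ?_) _
        exact Nat.mul_le_mul_right _ hS'.2
    _ = P (⋃ S ∈ 𝒮, A S ∩ B S) := by
        rw [measure_biUnion_finset]
        · intro S _ T _ hST
          refine Set.disjoint_left.2 fun ω h1 h2 => hST ?_
          have e1 : surv X n ω = S := h1.1
          have e2 : surv X n ω = T := h2.1
          rw [← e1, e2]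
        · exact fun S _ => (hmA S).inter (hmB S)
    _ ≤ _ := measure_mono h2

lemma die_tendsto (hM1 : CascadeM1 P X X₀) :
    Tendsto (fun n => P {ω | surv X n ω ≠ ∅ ∧ surv X (n + 1) ω = ∅}) atTop (nhds 0) := by
  refine ENNReal.tendsto_atTop_zero_of_tsum_ne_top ?_
  have hm : ∀ n, MeasurableSet {ω | surv X n ω = ∅} := fun n =>
    casSig_le hM1.meas _ _ (surv_meas ∅)
  rw [← measure_iUnion]
  · exact measure_ne_top _ _
  · have key : ∀ n m, n < m → Disjoint {ω | surv X n ω ≠ ∅ ∧ surv X (n + 1) ω = ∅}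
        {ω | surv X m ω ≠ ∅ ∧ surv X (m + 1) ω = ∅} := by
      intro n m hnm
      refine Set.disjoint_left.2 fun ω h1 h2 => h2.1 (surv_mono hnm h1.2)
    intro n m hnm
    rcases lt_or_gt_of_ne hnm with h | h
    · exact key n m h
    · exact (key m n h).symm
  · intro n
    exact (hm n).compl.inter (hm (n + 1))

lemma card_tendsto (hM1 : CascadeM1 P X X₀) (K : ℕ) (h0 : P {ω | X₀ ω = 0} ≠ 0) :
    Tendsto (fun n => P {ω | surv X n ω ≠ ∅ ∧ (surv X n ω).card ≤ K}) atTop (nhds 0) := by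
  set q := P {ω | X₀ ω = 0} with hq
  have hqK : q ^ (K * b) ≠ 0 := pow_ne_zero _ h0
  have hqt : q ^ (K * b) ≠ ⊤ := ENNReal.pow_ne_top (measure_ne_top _ _)
  have h1 := ENNReal.Tendsto.div_const (die_tendsto hM1) (b := q ^ (K * b)) (Or.inr hqK)
  rw [ENNReal.zero_div] at h1
  refine tendsto_of_tendsto_of_tendsto_of_le_of_le tendsto_const_nhds h1
    (fun _ => zero_le) fun n => ?_
  rw [ENNReal.le_div_iff_mul_le (Or.inl hqK) (Or.inl hqt)]
  exact die_bound hM1 n K rfl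

lemma unif_case (hM1 : CascadeM1 P X X₀) (hb : 2 ≤ b) (ν : Measure (SymbSpace b))
    [IsProbabilityMeasure ν] (hu : IsUniformMeasure ν)
    (hv : ∀ᵐ ω ∂P, X₀ ω = 0 ∨ X₀ ω = b) (h0 : P {ω | X₀ ω = 0} ≠ 0) :
    ∀ᵐ ω ∂P, Tendsto (fun n => cascadeZ X ν n ω) atTop (nhds 0) := by
  refine cascadeZ_zero hM1 ν fun ε hε => ?_
  have hb0 : (b : ℝ) ≠ 0 := by positivity
  have hvw : ∀ᵐ ω ∂P, ∀ w : List (Fin b), w ≠ [] → X w ω = 0 ∨ X w ω = b := by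
    rw [ae_all_iff]
    intro w
    by_cases hw : w = []
    · simp [hw]
    · have := (hM1.ident w hw).symm.ae_snd (p := fun x => x = 0 ∨ x = b)
        ((measurableSet_singleton (0 : ℝ)).union (measurableSet_singleton (b : ℝ))) hv
      filter_upwards [this] with ω h _ using h
  have hZ : ∀ n, ∀ᵐ ω ∂P, cascadeZ X ν n ω = (surv X n ω).card := by
    intro n
    filter_upwards [hvw] with ω hω
    have : ∀ u : Fin n → Fin b, cascadeY X (List.ofFn u) ω * (ν (cylinder (List.ofFn u))).toReal =
        if cascadeY X (List.ofFn u) ω ≠ 0 then 1 else 0 := by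
      intro u
      split_ifs with h
      · have hc : (ν (cylinder (List.ofFn u))).toReal = ((b : ℝ) ^ n)⁻¹ := by rw [hu]; simp
        have hY : cascadeY X (List.ofFn u) ω = (b : ℝ) ^ n := by
          rw [cascadeY_fin] at h ⊢
          rw [Finset.prod_ne_zero_iff] at h
          rw [Finset.prod_congr rfl fun i hi => (hω _ (take_ne u i)).resolve_left (h i hi)]
          simp
        rw [hc, hY, mul_inv_cancel₀ (pow_ne_zero _ hb0)]
      · rw [not_not] at h
        rw [h, zero_mul]
    unfold cascadeZ
    simp only [this, surv]
    rw [Finset.sum_boole]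
  rw [ENNReal.tendsto_nhds_zero]
  intro δ hδ
  obtain ⟨K, hKδ⟩ := ENNReal.exists_inv_nat_lt (a := δ / 2) (by simpa using hδ.ne')
  have h3 := (ENNReal.tendsto_nhds_zero.1 (card_tendsto hM1 K h0)) (δ / 2) (by simpa using hδ.ne')
  filter_upwards [h3] with n hn
  have hD := cascadeZ_doob hM1 ν n (K : NNReal)
  have hle : P {ω | ε ≤ cascadeZ X ν n ω} ≤
      P ({ω | surv X n ω ≠ ∅ ∧ (surv X n ω).card ≤ K} ∪
        {ω | ∃ k ≤ n, ((K : NNReal) : ℝ) ≤ cascadeZ X ν k ω}) := by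
    refine measure_mono_ae ?_
    filter_upwards [hZ n] with ω h (hε' : ε ≤ cascadeZ X ν n ω)
    by_cases hc : (surv X n ω).card ≤ K
    · left
      refine ⟨?_, hc⟩
      intro he
      rw [h, he] at hε'
      simp at hε'
      linarith
    · right
      refine ⟨n, le_rfl, ?_⟩
      rw [h]
      push Not at hc
      simpa using hc.le
  refine hle.trans ((measure_union_le _ _).trans ((add_le_add hn ?_).trans
    (ENNReal.add_halves δ).le))
  refine le_trans ?_ hKδ.le
  rw [ENNReal.le_inv_iff_mul_le, mul_comm]
  exact_mod_cast hD

end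


end

/-- **Theorem (singularity in the critical case for Gibbs-like ergodic measures).**
Suppose `ℙ(X ≠ 1) > 0` (so the cascade operator is not the identity). Let `ν` be a
shift-ergodic probability measure on `Σ`, with entropy `h_ν(σ)`, satisfying property (G)
with potential `f`; if `Q = Q_{h_ν(σ)}`, suppose moreover that `ν` satisfies (G̃). Then, if
`h_ν(σ) = h_X`, the measure `ν` is `Q`-singular. -/
theorem singular_in_critical_case_gibbs
    {b : ℕ} (hb : 2 ≤ b)
    {Ω : Type*} [MeasurableSpace Ω] (P : Measure Ω) [IsProbabilityMeasure P]
    (X : List (Fin b) → Ω → ℝ) (X₀ : Ω → ℝ)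
    (hM1 : CascadeM1 P X X₀)
    (hX1 : 0 < P {ω | X₀ ω ≠ 1})
    (ν : Measure (SymbSpace b)) [IsProbabilityMeasure ν]
    (hνerg : Ergodic (shiftMap b) ν)
    (f : SymbSpace b → ℝ) (hG : PropertyG ν f)
    (hν : ℝ) (hent : Tendsto (entropySeq ν) atTop (nhds hν))
    (hGt : IsQalphaCascade P X₀ hν → PropertyGtilde ν f hν)
    (hcrit : entropyX P X₀ = ENNReal.ofReal hν) :
    ∀ᵐ ω ∂P, Tendsto (fun n => cascadeZ X ν n ω) atTop (nhds 0) := by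
  have hprob := muX_prob hM1
  have hν0 := entropy_nonneg ν hent
  obtain ⟨hInt, hmean⟩ := muX_int hM1 hν0 hcrit
  by_cases hnd : ∃ c, ∀ᵐ a ∂(muX P X₀), a = c
  · obtain ⟨c, hc⟩ := hnd
    have hcν : c = hν := by
      rw [← hmean, integral_congr_ae hc]; simp
    subst hcν
    have hQ := degen_Q hM1 hc
    obtain ⟨_, hnu⟩ := hGt hQ
    by_cases hu : IsUniformMeasure ν
    · have hlog := entropy_unif ν hb hu hent
      have hb0 : (0 : ℝ) < b := by positivity
      have hexp : Real.exp c = b := by rw [hlog, Real.exp_log hb0]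
      refine unif_case hM1 hb ν hu ?_ ?_
      · rw [← hexp]; exact degen_vals hM1 hc
      · rw [hQ.2, Real.exp_neg, hexp]
        have h1 : ENNReal.ofReal ((b : ℝ)⁻¹) < 1 := by
          rw [ENNReal.ofReal_lt_one]
          have : (2 : ℝ) ≤ b := by exact_mod_cast hb
          exact inv_lt_one_of_one_lt₀ (by linarith)
        exact (tsub_pos_of_lt h1).ne'
    · exact lemA hM1 ν (nondeg_path ν hG _ (degen_BE ν f _ hc (hnu hu)))
  · rw [← hmean] at hent
    exact lemA hM1 ν (nondeg_path ν hG _ (nondeg ν hνerg hG _ hInt (muX_exp hM1) hent hnd))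

end
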